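/- arXiv:2603.15014 — 2 statements merged into one kernel-verified Lean document; each statement's English description precedes it below -/
import Mathlib

section
/- Let f(x) = F₁(x') + ωF₂(x') ∈ GSR(Ω_D) and for k ∈ ℕ set A_k(x') = ((1/r)∂_r)^k F₁(x') and B_k(x') = (∂_r ∘ (1/r)·)^k F₂(x') (with values at r = 0 understood as limits as r → 0, which exist). Then for all k ∈ ℕ and all x ∈ Ω_D: D_{x_p} A_k(x') − ∂_r B_k(x') = (2k/r) B_k(x') and D̄_{x_p} B_k(x') + ∂_r A_k(x') = 0. -/
open scoped BigOperators
open Filter Topology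

namespace GPSM

variable (A : Type*) [NormedAddCommGroup A] [NormedSpace ℝ A] [Mul A] [One A]

/-- `A` is a real alternative algebra with unit `1`, of finite dimension `d > 1`,
equipped with an anti-involution `conj` (a real-linear map with `(a^c)^c = a`,
`(ab)^c = b^c a^c`, fixing the reals).  The associator is alternating (left/right
alternative laws). -/
structure IsAltStarAlg (conj : A → A) : Prop where
  finDim : FiniteDimensional ℝ A
  one_lt_finrank : 1 < Module.finrank ℝ A
  mul_add' : ∀ a b c : A, a * (b + c) = a * b + a * c
  add_mul' : ∀ a b c : A, (a + b) * c = a * c + b * c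
  smul_mul' : ∀ (r : ℝ) (a b : A), (r • a) * b = r • (a * b)
  mul_smul' : ∀ (r : ℝ) (a b : A), a * (r • b) = r • (a * b)
  one_mul' : ∀ a : A, 1 * a = a
  mul_one' : ∀ a : A, a * 1 = a
  alt_left : ∀ a b : A, a * (a * b) = a * a * b
  alt_right : ∀ a b : A, a * b * b = a * (b * b)
  conj_add : ∀ a b : A, conj (a + b) = conj a + conj b
  conj_smul : ∀ (r : ℝ) (a : A), conj (r • a) = r • conj a
  conj_conj : ∀ a : A, conj (conj a) = a
  conj_mul : ∀ a b : A, conj (a * b) = conj b * conj a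
  conj_one : conj 1 = 1

/-- `v 0, v 1, …, v m` is a hypercomplex basis of the hypercomplex subspace
`M = span(v 0, …, v m)` of `A`: `v 0 = 1`, `t(v s) = 0`, `n(v s) = 1`, the `v s`
anticommute for distinct `s, t ∈ {1,…,m}`, they are linearly independent, and
`M` is contained in the quadratic cone `Q_A`. -/
structure IsHypBasis (conj : A → A) (v : ℕ → A) (m : ℕ) : Prop where
  v_zero : v 0 = 1
  trace_zero : ∀ s, 1 ≤ s → s ≤ m → v s + conj (v s) = 0
  norm_one : ∀ s, 1 ≤ s → s ≤ m → v s * conj (v s) = 1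
  anticomm : ∀ s t, 1 ≤ s → s ≤ m → 1 ≤ t → t ≤ m → s ≠ t → v s * v t = -(v t * v s)
  indep : LinearIndependent ℝ (fun i : Fin (m + 1) => v i)
  mem_cone : ∀ x ∈ Submodule.span ℝ (Set.range fun i : Fin (m + 1) => v (i : ℕ)),
      ∃ tr nr : ℝ, x + conj x = tr • (1 : A) ∧ x * conj x = nr • (1 : A) ∧
        ((∃ r : ℝ, x = r • (1 : A)) ∨ tr ^ 2 < 4 * nr)

variable {A}

/-- Identification of `ℝ^{m+1}` with the hypercomplex subspace `M`:
`(x_0,…,x_m) ↦ Σ x_s • v s`. -/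
def emb (v : ℕ → A) (m : ℕ) (x : Fin (m + 1) → ℝ) : A :=
  ∑ s : Fin (m + 1), x s • v (s : ℕ)

/-- First `p+1` coordinates of a point of `M ≅ ℝ^{m+1}`, i.e. the `x_p`-part. -/
def projP (m p : ℕ) (x : Fin (m + 1) → ℝ) : Fin (p + 1) → ℝ := fun s =>
  if h : (s : ℕ) < m + 1 then x ⟨(s : ℕ), h⟩ else 0

/-- Inclusion `ℝ^{p+1} ⊆ ℝ^{m+1}` (remaining coordinates `0`). -/
def injP (m p : ℕ) (y : Fin (p + 1) → ℝ) : Fin (m + 1) → ℝ := fun s =>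
  if h : (s : ℕ) < p + 1 then y ⟨(s : ℕ), h⟩ else 0

/-- The coordinates of `x_q` (last `q = m - p` coordinates of `x`). -/
def xqpart (m p : ℕ) (x : Fin (m + 1) → ℝ) : Fin (m + 1) → ℝ := fun s =>
  if (s : ℕ) ≤ p then 0 else x s

/-- The coordinates of `x_p` inside `ℝ^{m+1}`. -/
def xppart (m p : ℕ) (x : Fin (m + 1) → ℝ) : Fin (m + 1) → ℝ := fun s =>
  if (s : ℕ) ≤ p then x s else 0

/-- `r = |x_q|`. -/
noncomputable def rad (m p : ℕ) (x : Fin (m + 1) → ℝ) : ℝ :=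
  Real.sqrt (∑ s : Fin (m + 1), (xqpart m p x s) ^ 2)

/-- `ω = x_q / |x_q|` (coordinates), `0` when `x_q = 0`. -/
noncomputable def normq (m p : ℕ) (x : Fin (m + 1) → ℝ) : Fin (m + 1) → ℝ :=
  (rad m p x)⁻¹ • xqpart m p x

/-- The reflection `x = x_p + x_q ↦ x_⋄ = x_p - x_q`. -/
def reflP (m p : ℕ) (x : Fin (m + 1) → ℝ) : Fin (m + 1) → ℝ := fun s =>
  if (s : ℕ) ≤ p then x s else -x s

/-- The sphere `𝕊 = {x_q ∈ span(v_{p+1},…,v_m) : x_q² = -1}`, in coordinates. -/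
def Sph (v : ℕ → A) (m p : ℕ) : Set (Fin (m + 1) → ℝ) :=
  {w | (∀ s : Fin (m + 1), (s : ℕ) ≤ p → w s = 0) ∧ emb v m w * emb v m w = -1}

/-- The point `x_p + r ω` of `M ≅ ℝ^{m+1}`. -/
def pt (m p : ℕ) (w : Fin (m + 1) → ℝ) (y : Fin (p + 1) → ℝ) (r : ℝ) :
    Fin (m + 1) → ℝ :=
  injP m p y + r • w

/-- The slice `Ω_ω ⊆ ℝ^{p+2}` of `Ω` at `ω`. -/
def sliceSet (m p : ℕ) (Ω : Set (Fin (m + 1) → ℝ)) (w : Fin (m + 1) → ℝ) :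
    Set ((Fin (p + 1) → ℝ) × ℝ) := {z | pt m p w z.1 z.2 ∈ Ω}

/-- The restriction `f_ω` of `f` to the slice at `ω`, as a function on `ℝ^{p+2}`. -/
def sliceFun (m p : ℕ) (f : (Fin (m + 1) → ℝ) → A) (w : Fin (m + 1) → ℝ) :
    (Fin (p + 1) → ℝ) × ℝ → A := fun z => f (pt m p w z.1 z.2)

/-- Partial derivative `∂_{x_s}` of a function on `ℝ^{m+1}`. -/
noncomputable def pdF (m : ℕ) (s : Fin (m + 1)) (f : (Fin (m + 1) → ℝ) → A)
    (x : Fin (m + 1) → ℝ) : A := fderiv ℝ f x (Pi.single s 1)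

/-- Partial derivative `∂_{x_s}` of a function on `ℝ^{p+1}`. -/
noncomputable def pdP (p : ℕ) (s : Fin (p + 1)) (g : (Fin (p + 1) → ℝ) → A)
    (y : Fin (p + 1) → ℝ) : A := fderiv ℝ g y (Pi.single s 1)

/-- Partial derivative `∂_{x_s}` of a function on `ℝ^{p+2} = ℝ^{p+1} × ℝ`. -/
noncomputable def pdSx (p : ℕ) (s : Fin (p + 1)) (G : (Fin (p + 1) → ℝ) × ℝ → A)
    (z : (Fin (p + 1) → ℝ) × ℝ) : A := fderiv ℝ G z (Pi.single s 1, 0)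

/-- Partial derivative `∂_r` of a function on `ℝ^{p+2} = ℝ^{p+1} × ℝ`. -/
noncomputable def pdSr (p : ℕ) (G : (Fin (p + 1) → ℝ) × ℝ → A)
    (z : (Fin (p + 1) → ℝ) × ℝ) : A := fderiv ℝ G z (0, 1)

/-- Second partial derivative `∂_r²`. -/
noncomputable def pdSr2 (p : ℕ) (G : (Fin (p + 1) → ℝ) × ℝ → A)
    (z : (Fin (p + 1) → ℝ) × ℝ) : A := pdSr p (pdSr p G) z

/-- The operator `Σ_{lo ≤ s ≤ hi} v_s ∂_{x_s}` on functions on `ℝ^{m+1}`.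
`Dop v m 0 p` is `D_{x_p}`, `Dop v m (p+1) m` is `D_{x_q}`, `Dop v m 0 m` is `D_x`. -/
noncomputable def Dop (v : ℕ → A) (m lo hi : ℕ) (f : (Fin (m + 1) → ℝ) → A)
    (x : Fin (m + 1) → ℝ) : A :=
  ∑ s : Fin (m + 1), if lo ≤ (s : ℕ) ∧ (s : ℕ) ≤ hi then v (s : ℕ) * pdF m s f x else 0

/-- The conjugate operator `∂_{x_0} - Σ_{1 ≤ s ≤ hi} v_s ∂_{x_s}` on functions on
`ℝ^{m+1}`; `Dbarop v m p` is `D̄_{x_p}`, `Dbarop v m m` is `D̄_x`. -/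
noncomputable def Dbarop (v : ℕ → A) (m hi : ℕ) (f : (Fin (m + 1) → ℝ) → A)
    (x : Fin (m + 1) → ℝ) : A :=
  pdF m 0 f x -
    ∑ s : Fin (m + 1), if 1 ≤ (s : ℕ) ∧ (s : ℕ) ≤ hi then v (s : ℕ) * pdF m s f x else 0

/-- The operator `D_{x_p} = Σ_{s=0}^p v_s ∂_{x_s}` on functions on `ℝ^{p+1}`. -/
noncomputable def DopP (v : ℕ → A) (p : ℕ) (g : (Fin (p + 1) → ℝ) → A)
    (y : Fin (p + 1) → ℝ) : A :=
  ∑ s : Fin (p + 1), v (s : ℕ) * pdP p s g y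

/-- The operator `D̄_{x_p} = ∂_{x_0} - Σ_{s=1}^p v_s ∂_{x_s}` on functions on `ℝ^{p+1}`. -/
noncomputable def DbaropP (v : ℕ → A) (p : ℕ) (g : (Fin (p + 1) → ℝ) → A)
    (y : Fin (p + 1) → ℝ) : A :=
  pdP p 0 g y - ∑ s : Fin (p + 1), if 1 ≤ (s : ℕ) then v (s : ℕ) * pdP p s g y else 0

/-- The operator `D_{x_p}` on functions on `ℝ^{p+2} = ℝ^{p+1} × ℝ`. -/
noncomputable def DopSx (v : ℕ → A) (p : ℕ) (G : (Fin (p + 1) → ℝ) × ℝ → A)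
    (z : (Fin (p + 1) → ℝ) × ℝ) : A :=
  ∑ s : Fin (p + 1), v (s : ℕ) * pdSx p s G z

/-- The operator `D̄_{x_p}` on functions on `ℝ^{p+2} = ℝ^{p+1} × ℝ`. -/
noncomputable def DbaropSx (v : ℕ → A) (p : ℕ) (G : (Fin (p + 1) → ℝ) × ℝ → A)
    (z : (Fin (p + 1) → ℝ) × ℝ) : A :=
  pdSx p 0 G z - ∑ s : Fin (p + 1), if 1 ≤ (s : ℕ) then v (s : ℕ) * pdSx p s G z else 0

/-- The Laplacian `Δ_x` on functions on `ℝ^{m+1}`. -/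
noncomputable def lapF (m : ℕ) (f : (Fin (m + 1) → ℝ) → A)
    (x : Fin (m + 1) → ℝ) : A :=
  ∑ s : Fin (m + 1), pdF m s (pdF m s f) x

/-- The Laplacian `Δ_{x_p}` on functions on `ℝ^{p+1}`. -/
noncomputable def lapP (p : ℕ) (g : (Fin (p + 1) → ℝ) → A)
    (y : Fin (p + 1) → ℝ) : A :=
  ∑ s : Fin (p + 1), pdP p s (pdP p s g) y

/-- Iterated Laplacian `Δ_x^k`. -/
noncomputable def lapIterF (m k : ℕ) (f : (Fin (m + 1) → ℝ) → A) :
    (Fin (m + 1) → ℝ) → A :=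
  (fun g => lapF m g)^[k] f

/-- Iterated Laplacian `Δ_{x_p}^k`. -/
noncomputable def lapIterP (p k : ℕ) (g : (Fin (p + 1) → ℝ) → A) :
    (Fin (p + 1) → ℝ) → A :=
  (fun h => lapP p h)^[k] g

/-- The Laplacian `Δ_{x'} = Δ_{x_p} + ∂_r²` on functions on `ℝ^{p+2}`. -/
noncomputable def lapSx (p : ℕ) (G : (Fin (p + 1) → ℝ) × ℝ → A)
    (z : (Fin (p + 1) → ℝ) × ℝ) : A :=
  (∑ s : Fin (p + 1), pdSx p s (pdSx p s G) z) + pdSr2 p G z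

/-- The slice Cauchy-Riemann operator `D_ω = D_{x_p} + ω ∂_r` applied to a function
on `ℝ^{p+2}`, where `ω` is given in coordinates by `w`. -/
noncomputable def DomCR (v : ℕ → A) (m p : ℕ) (w : Fin (m + 1) → ℝ)
    (G : (Fin (p + 1) → ℝ) × ℝ → A) (z : (Fin (p + 1) → ℝ) × ℝ) : A :=
  DopSx v p G z + emb v m w * pdSr p G z

/-- `f` is left generalized partial-slice monogenic (of type `(p, m-p)`) on `Ω`. -/
def GSM (v : ℕ → A) (m p : ℕ) (f : (Fin (m + 1) → ℝ) → A)
    (Ω : Set (Fin (m + 1) → ℝ)) : Prop :=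
  ∀ w ∈ Sph v m p, ContDiffOn ℝ 1 (sliceFun m p f w) (sliceSet m p Ω w) ∧
    ∀ z ∈ sliceSet m p Ω w, DomCR v m p w (sliceFun m p f w) z = 0

/-- `Ω` is partially symmetric with respect to `ℝ^{p+1}`. -/
def PSym (v : ℕ → A) (m p : ℕ) (Ω : Set (Fin (m + 1) → ℝ)) : Prop :=
  ∀ x ∈ Ω, ∀ w ∈ Sph v m p, xppart m p x + rad m p x • w ∈ Ω

/-- `Ω` is a slice domain: a domain meeting `ℝ^{p+1}` all of whose slices are
domains in `ℝ^{p+2}`. -/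
def SliceDomain (v : ℕ → A) (m p : ℕ) (Ω : Set (Fin (m + 1) → ℝ)) : Prop :=
  IsOpen Ω ∧ IsConnected Ω ∧ (∃ x ∈ Ω, xqpart m p x = 0) ∧
    ∀ w ∈ Sph v m p, IsConnected (sliceSet m p Ω w)

/-- The reflection `(x_p, r) ↦ (x_p, -r)` of `ℝ^{p+2}`. -/
def reflD (p : ℕ) (z : (Fin (p + 1) → ℝ) × ℝ) : (Fin (p + 1) → ℝ) × ℝ := (z.1, -z.2)

/-- The p-symmetric completion `Ω_D ⊆ M` of `D ⊆ ℝ^{p+2}`. -/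
def OmegaD (v : ℕ → A) (m p : ℕ) (D : Set ((Fin (p + 1) → ℝ) × ℝ)) :
    Set (Fin (m + 1) → ℝ) :=
  {x | ∃ w ∈ Sph v m p, ∃ z ∈ D, x = pt m p w z.1 z.2}

/-- `(F₁, F₂)` satisfies the even-odd (stem function) conditions on `D`. -/
def IsStem (p : ℕ) (D : Set ((Fin (p + 1) → ℝ) × ℝ))
    (F₁ F₂ : (Fin (p + 1) → ℝ) × ℝ → A) : Prop :=
  ∀ z ∈ D, F₁ (reflD p z) = F₁ z ∧ F₂ (reflD p z) = -F₂ z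

/-- `f` is the generalized partial-slice function induced by the stem `(F₁, F₂)`:
`f(x_p + rω) = F₁(x_p, r) + ω F₂(x_p, r)`. -/
def Induced (v : ℕ → A) (m p : ℕ) (D : Set ((Fin (p + 1) → ℝ) × ℝ))
    (F₁ F₂ : (Fin (p + 1) → ℝ) × ℝ → A) (f : (Fin (m + 1) → ℝ) → A) : Prop :=
  ∀ w ∈ Sph v m p, ∀ z ∈ D, f (pt m p w z.1 z.2) = F₁ z + emb v m w * F₂ z

/-- The generalized Cauchy-Riemann system for the stem `(F₁, F₂)` on `D`. -/
def StemCR (v : ℕ → A) (p : ℕ) (D : Set ((Fin (p + 1) → ℝ) × ℝ))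
    (F₁ F₂ : (Fin (p + 1) → ℝ) × ℝ → A) : Prop :=
  ∀ z ∈ D, DopSx v p F₁ z - pdSr p F₂ z = 0 ∧ DbaropSx v p F₂ z + pdSr p F₁ z = 0

/-- `f` is generalized partial-slice regular on `Ω_D`. -/
def MemGSR (v : ℕ → A) (m p : ℕ) (D : Set ((Fin (p + 1) → ℝ) × ℝ))
    (f : (Fin (m + 1) → ℝ) → A) : Prop :=
  ∃ F₁ F₂ : (Fin (p + 1) → ℝ) × ℝ → A, IsStem p D F₁ F₂ ∧
    ContDiffOn ℝ 1 F₁ D ∧ ContDiffOn ℝ 1 F₂ D ∧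
    Induced v m p D F₁ F₂ f ∧ StemCR v p D F₁ F₂

/-- `f` is a generalized partial-slice function on `Ω`. -/
def MemGS (v : ℕ → A) (m p : ℕ) (Ω : Set (Fin (m + 1) → ℝ))
    (f : (Fin (m + 1) → ℝ) → A) : Prop :=
  ∃ F₁ F₂ : (Fin (p + 1) → ℝ) × ℝ → A,
    (∀ z : (Fin (p + 1) → ℝ) × ℝ, F₁ (reflD p z) = F₁ z ∧ F₂ (reflD p z) = -F₂ z) ∧
    ∀ x ∈ Ω, f x = F₁ (projP m p x, rad m p x) +
      emb v m (normq m p x) * F₂ (projP m p x, rad m p x)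

/-- Non-associative power: `a^n` with products taken from the right. -/
def apow (a : A) (n : ℕ) : A := (fun b => a * b)^[n] 1

/-- Partial even part `PE[f](x) = (f(x) + f(x_⋄))/2`. -/
noncomputable def PE (m p : ℕ) (f : (Fin (m + 1) → ℝ) → A)
    (x : Fin (m + 1) → ℝ) : A := (2 : ℝ)⁻¹ • (f x + f (reflP m p x))

/-- Partial odd part `PO[f](x) = (f(x) - f(x_⋄))/2`. -/
noncomputable def PO (m p : ℕ) (f : (Fin (m + 1) → ℝ) → A)
    (x : Fin (m + 1) → ℝ) : A := (2 : ℝ)⁻¹ • (f x - f (reflP m p x))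

/-- `Ω₀* = {x_p + x_q : x_p ∈ Ω₀, x_q ∈ ℝ^q}`. -/
def Omega0star (m p : ℕ) (Ω₀ : Set (Fin (p + 1) → ℝ)) : Set (Fin (m + 1) → ℝ) :=
  {x | projP m p x ∈ Ω₀}

/-- The spherical derivative `f'_s(x) = (1/2) x_q⁻¹ (f(x) - f(x_⋄))`
(using `x_q⁻¹ = -x_q/|x_q|²`). -/
noncomputable def sder (v : ℕ → A) (m p : ℕ) (f : (Fin (m + 1) → ℝ) → A)
    (x : Fin (m + 1) → ℝ) : A :=
  -(((2 : ℝ) * rad m p x ^ 2)⁻¹) • (emb v m (xqpart m p x) * (f x - f (reflP m p x)))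

/-- The spherical Dirac operator
`Γ f = -(1/2) Σ_{p+1 ≤ i,j ≤ m} v_i (v_j (L_{ij} f))`. -/
noncomputable def sphericalGamma (v : ℕ → A) (m p : ℕ) (f : (Fin (m + 1) → ℝ) → A)
    (x : Fin (m + 1) → ℝ) : A :=
  -((2 : ℝ)⁻¹) • ∑ i : Fin (m + 1), ∑ j : Fin (m + 1),
    if p < (i : ℕ) ∧ p < (j : ℕ) then
      v (i : ℕ) * (v (j : ℕ) * (x i • pdF m j f x - x j • pdF m i f x)) else 0

/-- The slice Cauchy-Riemann operator `D_ω` applied to (the slice restriction of) a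
function `f` on `M`, at the point `x` (with `ω = x_q/|x_q|`). -/
noncomputable def DomCRat (v : ℕ → A) (m p : ℕ) (f : (Fin (m + 1) → ℝ) → A)
    (x : Fin (m + 1) → ℝ) : A :=
  DomCR v m p (normq m p x) (sliceFun m p f (normq m p x)) (projP m p x, rad m p x)

/-- `f` is left monogenic on `Ω`: `f ∈ C¹` and `D_x f = 0`. -/
def Monogenic (v : ℕ → A) (m : ℕ) (f : (Fin (m + 1) → ℝ) → A)
    (Ω : Set (Fin (m + 1) → ℝ)) : Prop :=
  ContDiffOn ℝ 1 f Ω ∧ ∀ x ∈ Ω, Dop v m 0 m f x = 0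

/-- `f` is harmonic on `Ω`: `f ∈ C²` and `Δ_x f = 0`. -/
def Harmonic (m : ℕ) (f : (Fin (m + 1) → ℝ) → A)
    (Ω : Set (Fin (m + 1) → ℝ)) : Prop :=
  ContDiffOn ℝ 2 f Ω ∧ ∀ x ∈ Ω, lapF m f x = 0

/-- A family of functions converges normally (locally a summable uniform bound). -/
def NormallyConvOn {E F : Type*} [TopologicalSpace E] [NormedAddCommGroup F]
    (u : ℕ → E → F) (s : Set E) : Prop :=
  ∀ x ∈ s, ∃ U ∈ nhds x, ∃ c : ℕ → ℝ, Summable c ∧ ∀ k : ℕ, ∀ y ∈ U, ‖u k y‖ ≤ c k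

/-- The generalized partial-slice CK-extension
`CK[f₀](x) = Σ_k (r^{2k}/(2k)!)(-Δ_{x_p})^k f₀(x_p)
  + ω Σ_k (r^{2k+1}/(2k+1)!)(-Δ_{x_p})^k (D_{x_p} f₀)(x_p)`. -/
noncomputable def CKe (v : ℕ → A) (m p : ℕ) (f₀ : (Fin (p + 1) → ℝ) → A)
    (x : Fin (m + 1) → ℝ) : A :=
  (∑' k : ℕ, (((-1 : ℝ) ^ k * rad m p x ^ (2 * k)) / (2 * k).factorial) •
      lapIterP p k f₀ (projP m p x)) +
  emb v m (normq m p x) *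
    ∑' k : ℕ, (((-1 : ℝ) ^ k * rad m p x ^ (2 * k + 1)) / (2 * k + 1).factorial) •
      lapIterP p k (DopP v p f₀) (projP m p x)

/-- The coefficient `Γ(q/2)(-1)^k r^{2k} / (2^{2k} k! Γ(k + q/2))`. -/
noncomputable def hgckC (q k : ℕ) (r : ℝ) : ℝ :=
  (Real.Gamma ((q : ℝ) / 2) * (-1) ^ k * r ^ (2 * k)) /
    (2 ^ (2 * k) * (k.factorial : ℝ) * Real.Gamma ((k : ℝ) + (q : ℝ) / 2))

/-- The coefficient `Γ(q/2)(-1)^k r^{2k} / (2^{2k+1} k! Γ(k + q/2 + 1))`. -/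
noncomputable def gckC' (q k : ℕ) (r : ℝ) : ℝ :=
  (Real.Gamma ((q : ℝ) / 2) * (-1) ^ k * r ^ (2 * k)) /
    (2 ^ (2 * k + 1) * (k.factorial : ℝ) * Real.Gamma ((k : ℝ) + (q : ℝ) / 2 + 1))

/-- The coefficient `Γ(q/2 + 1)(-1)^k r^{2k} / (2^{2k} k! Γ(k + q/2 + 1))`. -/
noncomputable def hgckC' (q k : ℕ) (r : ℝ) : ℝ :=
  (Real.Gamma ((q : ℝ) / 2 + 1) * (-1) ^ k * r ^ (2 * k)) /
    (2 ^ (2 * k) * (k.factorial : ℝ) * Real.Gamma ((k : ℝ) + (q : ℝ) / 2 + 1))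

/-- The monogenic generalized CK-extension `GCK[A₀]`. -/
noncomputable def GCKe (v : ℕ → A) (m p : ℕ) (A₀ : (Fin (p + 1) → ℝ) → A)
    (x : Fin (m + 1) → ℝ) : A :=
  (∑' k : ℕ, hgckC (m - p) k (rad m p x) • lapIterP p k A₀ (projP m p x)) +
  emb v m (xqpart m p x) *
    ∑' k : ℕ, gckC' (m - p) k (rad m p x) • lapIterP p k (DopP v p A₀) (projP m p x)

/-- The harmonic generalized CK-extension `HGCK[A₀, A₁]`. -/
noncomputable def HGCKe (v : ℕ → A) (m p : ℕ) (A₀ A₁ : (Fin (p + 1) → ℝ) → A)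
    (x : Fin (m + 1) → ℝ) : A :=
  (∑' k : ℕ, hgckC (m - p) k (rad m p x) • lapIterP p k A₀ (projP m p x)) +
  emb v m (xqpart m p x) *
    ∑' k : ℕ, hgckC' (m - p) k (rad m p x) • lapIterP p k A₁ (projP m p x)

/-- The operator `(1/r)∂_r`, extended to `r = 0` by its limit `∂_r²` (on even
functions). -/
noncomputable def T1 (p : ℕ) (G : (Fin (p + 1) → ℝ) × ℝ → A) :
    (Fin (p + 1) → ℝ) × ℝ → A := fun z =>
  if z.2 = 0 then pdSr2 p G z else (z.2)⁻¹ • pdSr p G z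

/-- The operator `∂_r ∘ (1/r)`, extended to `r = 0` by its limit `(1/2)∂_r²` (on odd
functions). -/
noncomputable def T2 (p : ℕ) (G : (Fin (p + 1) → ℝ) × ℝ → A) :
    (Fin (p + 1) → ℝ) × ℝ → A := fun z =>
  if z.2 = 0 then (2 : ℝ)⁻¹ • pdSr2 p G z
  else fderiv ℝ (fun t : ℝ => t⁻¹ • G (z.1, t)) z.2 1

/-- `C_q(k) = (q-1)(q-3)⋯(q-2k+1)`, `C_q(0) = 1`. -/
noncomputable def cq (q k : ℕ) : ℝ :=
  ∏ i ∈ Finset.range k, ((q : ℝ) - (2 * (i : ℝ) + 1))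

/-- Double factorial. -/
def dfac : ℕ → ℕ
  | 0 => 1
  | 1 => 1
  | n + 2 => (n + 2) * dfac n

/-- The Fueter-Sce constant `γ_q = (-1)^{(q-1)/2} (q-1)!!/(q-2)!!`. -/
noncomputable def gammaQ (q : ℕ) : ℝ :=
  (-1 : ℝ) ^ ((q - 1) / 2) * (dfac (q - 1) : ℝ) / (dfac (q - 2) : ℝ)


section Weyl
open MeasureTheory Set
open scoped ContDiff

lemma weyl_symm {E A : Type*} [NormedAddCommGroup E] [NormedSpace ℝ E] [FiniteDimensional ℝ E]
    [MeasurableSpace E] [BorelSpace E] [NormedAddCommGroup A] [NormedSpace ℝ A]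
    (μ : Measure E) [μ.IsAddHaarMeasure] (ψ : E → ℝ) (hψ : ContDiff ℝ ∞ ψ)
    (hc : HasCompactSupport ψ) (G : E → A) (hG : ContDiff ℝ 1 G) (a b : E) :
    ∫ y, fderiv ℝ ψ y a • fderiv ℝ G y b ∂μ = ∫ y, fderiv ℝ ψ y b • fderiv ℝ G y a ∂μ := by
  have hψ1 : ∀ a : E, ContDiff ℝ ∞ (fun y => fderiv ℝ ψ y a) := fun a =>
    (hψ.fderiv_right (m := ∞) (by simp)).clm_apply contDiff_const
  have hψc : ∀ a : E, HasCompactSupport (fun y => fderiv ℝ ψ y a) := fun a =>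
    hc.fderiv_apply ℝ a
  have hGc : ∀ b : E, Continuous (fun y => fderiv ℝ G y b) := fun b =>
    (hG.continuous_fderiv (by simp)).clm_apply continuous_const
  have key : ∀ a b : E, ∫ y, fderiv ℝ ψ y a • fderiv ℝ G y b ∂μ
      = - ∫ y, fderiv ℝ (fun y => fderiv ℝ ψ y a) y b • G y ∂μ := by
    intro a b
    apply integral_smul_fderiv_eq_neg_fderiv_smul_of_integrable
    · apply Continuous.integrable_of_hasCompactSupport
      · exact ((((hψ1 a).continuous_fderiv (by simp)).clm_apply continuous_const)).smul
          hG.continuous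
      · exact ((hψc a).fderiv_apply ℝ b).smul_right
    · apply Continuous.integrable_of_hasCompactSupport
      · exact (hψ1 a).continuous.smul (hGc b)
      · exact (hψc a).smul_right
    · apply Continuous.integrable_of_hasCompactSupport
      · exact (hψ1 a).continuous.smul hG.continuous
      · exact (hψc a).smul_right
    · intro x _; exact (hψ1 a).differentiable (by simp) x
    · intro x _; exact hG.differentiable (by simp) x
  rw [key, key]
  congr 2
  ext y
  have hd : DifferentiableAt ℝ (fderiv ℝ ψ) y :=
    (hψ.fderiv_right (m := ∞) (by simp)).differentiable (by simp) y
  have : ∀ a b : E, fderiv ℝ (fun y => fderiv ℝ ψ y a) y b = fderiv ℝ (fderiv ℝ ψ) y b a := by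
    intro a b
    rw [fderiv_clm_apply hd (differentiableAt_const _)]
    simp
  rw [this, this]
  have hs : IsSymmSndFDerivAt ℝ ψ y := hψ.contDiffAt.isSymmSndFDerivAt (by
    rw [minSmoothness_of_isRCLikeNormedField]; exact WithTop.coe_le_coe.2 (le_top (a := (2 : ℕ∞))))
  rw [hs b a]

/-- weak harmonicity of the first component of a first order Clifford system -/
lemma weyl_weak {E A ι : Type*} [NormedAddCommGroup E] [NormedSpace ℝ E] [FiniteDimensional ℝ E]
    [MeasurableSpace E] [BorelSpace E] [NormedAddCommGroup A] [NormedSpace ℝ A]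
    [CompleteSpace A] [Fintype ι] [DecidableEq ι]
    (μ : Measure E) [μ.IsAddHaarMeasure] (e : ι → E) (er : E)
    (L Lb : ι → A →L[ℝ] A)
    (hL : ∀ s t a, Lb s (L t a) + Lb t (L s a) = if s = t then (2:ℝ) • a else 0)
    (u₁ u₂ : E → A) (hu₁ : ContDiff ℝ 1 u₁) (hu₂ : ContDiff ℝ 1 u₂) (V : Set E)
    (h1 : ∀ y ∈ V, ∑ s, L s (fderiv ℝ u₁ y (e s)) = fderiv ℝ u₂ y er)
    (h2 : ∀ y ∈ V, ∑ s, Lb s (fderiv ℝ u₂ y (e s)) = - fderiv ℝ u₁ y er)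
    (ψ : E → ℝ) (hψ : ContDiff ℝ ∞ ψ)
    (hc : HasCompactSupport ψ) (hV : tsupport ψ ⊆ V) :
    ∑ s, ∫ y, fderiv ℝ ψ y (e s) • fderiv ℝ u₁ y (e s) ∂μ
      + ∫ y, fderiv ℝ ψ y er • fderiv ℝ u₁ y er ∂μ = 0 := by
  have hint : ∀ (u : E → A), ContDiff ℝ 1 u → ∀ a b : E,
      Integrable (fun y => fderiv ℝ ψ y a • fderiv ℝ u y b) μ := by
    intro u hu a b
    apply Continuous.integrable_of_hasCompactSupport
    · exact ((hψ.continuous_fderiv (by simp)).clm_apply continuous_const).smul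
        ((hu.continuous_fderiv (by simp)).clm_apply continuous_const)
    · exact (hc.fderiv_apply ℝ a).smul_right
  have hzero : ∀ y, y ∉ V → ∀ a, fderiv ℝ ψ y a = 0 := by
    intro y hy a
    have : y ∉ tsupport ψ := fun h => hy (hV h)
    have h0 : fderiv ℝ ψ y = 0 := by
      by_contra hne
      exact this (support_fderiv_subset ℝ hne)
    simp [h0]
  have e1 : ∀ a, ∑ t, L t (∫ y, fderiv ℝ ψ y a • fderiv ℝ u₁ y (e t) ∂μ)
      = ∫ y, fderiv ℝ ψ y a • fderiv ℝ u₂ y er ∂μ := by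
    intro a
    simp_rw [← ContinuousLinearMap.integral_comp_comm _ (hint u₁ hu₁ _ _)]
    rw [← integral_finsetSum _ (fun i _ => (L i).integrable_comp (hint u₁ hu₁ _ _))]
    congr 1
    ext y
    by_cases hy : y ∈ V
    · rw [← h1 y hy, Finset.smul_sum]; simp
    · simp [hzero y hy]
  have e2 : ∀ a, ∑ t, Lb t (∫ y, fderiv ℝ ψ y a • fderiv ℝ u₂ y (e t) ∂μ)
      = - ∫ y, fderiv ℝ ψ y a • fderiv ℝ u₁ y er ∂μ := by
    intro a
    simp_rw [← ContinuousLinearMap.integral_comp_comm _ (hint u₂ hu₂ _ _)]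
    rw [← integral_finsetSum _ (fun i _ => (Lb i).integrable_comp (hint u₂ hu₂ _ _)),
      ← integral_neg]
    congr 1
    ext y
    by_cases hy : y ∈ V
    · rw [← smul_neg, ← h2 y hy, Finset.smul_sum]; simp
    · simp [hzero y hy]
  have e3 : ∑ s, ∑ t, Lb s (L t (∫ y, fderiv ℝ ψ y (e s) • fderiv ℝ u₁ y (e t) ∂μ))
      = - ∫ y, fderiv ℝ ψ y er • fderiv ℝ u₁ y er ∂μ := by
    rw [← e2 er]
    refine Finset.sum_congr rfl fun s _ => ?_
    rw [← map_sum, e1, weyl_symm μ ψ hψ hc u₂ hu₂]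
  have e4 : ∑ s, ∑ t, Lb s (L t (∫ y, fderiv ℝ ψ y (e s) • fderiv ℝ u₁ y (e t) ∂μ))
      = ∑ s, ∑ t, Lb t (L s (∫ y, fderiv ℝ ψ y (e s) • fderiv ℝ u₁ y (e t) ∂μ)) := by
    rw [Finset.sum_comm]
    refine Finset.sum_congr rfl fun s _ => Finset.sum_congr rfl fun t _ => ?_
    rw [weyl_symm μ ψ hψ hc u₁ hu₁]
  have e5 : (2:ℝ) • ∑ s, ∑ t, Lb s (L t (∫ y, fderiv ℝ ψ y (e s) • fderiv ℝ u₁ y (e t) ∂μ))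
      = (2:ℝ) • ∑ s, ∫ y, fderiv ℝ ψ y (e s) • fderiv ℝ u₁ y (e s) ∂μ := by
    conv_lhs => rw [two_smul]
    nth_rewrite 2 [e4]
    rw [← Finset.sum_add_distrib]
    simp_rw [← Finset.sum_add_distrib, hL]
    simp [Finset.smul_sum]
  have e6 := smul_right_injective A (two_ne_zero (α := ℝ)) e5
  rw [← e6, e3]
  simp

lemma weyl_radial {E κ : Type*} [NormedAddCommGroup E] [NormedSpace ℝ E] [FiniteDimensional ℝ E]
    [MeasurableSpace E] [BorelSpace E] [Fintype κ] [Nonempty κ]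
    (μ : Measure E) [μ.IsAddHaarMeasure] (b : Module.Basis κ ℝ E) :
    ∃ ψ φ : E → ℝ, ContDiff ℝ ∞ ψ ∧ ContDiff ℝ ∞ φ ∧ HasCompactSupport ψ ∧
      HasCompactSupport φ ∧ (∀ y i, fderiv ℝ ψ y (b i) = φ y * b.repr y i) ∧
      ∫ y, φ y ∂μ ≠ 0 := by
  classical
  let P : ℝ → ℝ := fun s => Real.smoothTransition (1 - s)
  have hP : ContDiff ℝ ∞ P := Real.smoothTransition.contDiff.comp (contDiff_const.sub contDiff_id)
  have hPa : Antitone P := fun x y h => Real.smoothTransition.monotone (by linarith)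
  let c : κ → E →L[ℝ] ℝ := fun i => LinearMap.toContinuousLinearMap (b.coord i)
  let Q : E → ℝ := fun y => ∑ i, (c i y) ^ 2
  have hQ : ContDiff ℝ ∞ Q := ContDiff.sum fun i _ => (c i).contDiff.pow 2
  have hP' : ContDiff ℝ ∞ (deriv P) := (contDiff_infty_iff_deriv.1 hP).2
  have hcpt : IsCompact {y | Q y ≤ 1} := by
    have : IsCompact ((b.equivFun.toContinuousLinearEquiv.toHomeomorph) ⁻¹'
        (Metric.closedBall (0 : κ → ℝ) 1)) := by
      rw [Homeomorph.isCompact_preimage]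
      exact isCompact_closedBall _ _
    refine this.of_isClosed_subset (isClosed_le hQ.continuous continuous_const) ?_
    intro y hy
    simp only [mem_preimage, mem_closedBall_zero_iff]
    rw [pi_norm_le_iff_of_nonneg zero_le_one]
    intro i
    have h1 : (c i y) ^ 2 ≤ 1 := le_trans
      (Finset.single_le_sum (f := fun i => (c i y)^2) (fun i _ => sq_nonneg _) (Finset.mem_univ i))
      hy
    have : |c i y| ≤ 1 := (sq_le_one_iff_abs_le_one _).1 h1
    simpa [c] using this
  have hPz : ∀ s, 1 ≤ s → P s = 0 := fun s hs =>
    Real.smoothTransition.zero_of_nonpos (by linarith)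
  have hdPz : ∀ s, 1 < s → deriv P s = 0 := by
    intro s hs
    have : P =ᶠ[𝓝 s] fun _ => 0 := by
      filter_upwards [lt_mem_nhds hs] with t ht using hPz t ht.le
    rw [this.deriv_eq]; simp
  have hφc : HasCompactSupport (fun y => 2 * deriv P (Q y)) := by
    refine HasCompactSupport.intro hcpt ?_
    intro y hy
    simp only [mem_ofPred_eq, not_le] at hy
    simp [hdPz _ hy]
  have hφs : ContDiff ℝ ∞ (fun y => 2 * deriv P (Q y)) := contDiff_const.mul (hP'.comp hQ)
  refine ⟨fun y => P (Q y), fun y => 2 * deriv P (Q y), hP.comp hQ, hφs, ?_, hφc, ?_, ?_⟩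
  · refine HasCompactSupport.intro hcpt ?_
    intro y hy
    simp only [mem_ofPred_eq, not_le] at hy
    exact hPz _ hy.le
  · intro y i
    have hdQ : HasFDerivAt Q (∑ i, (2 * c i y) • c i) y := by
      apply HasFDerivAt.fun_sum
      intro i _
      have := ((c i).hasFDerivAt (x := y)).pow 2
      simpa using this
    have hdP : HasDerivAt P (deriv P (Q y)) (Q y) :=
      (hP.differentiable (by simp) _).hasDerivAt
    have := hdP.comp_hasFDerivAt y hdQ
    rw [show (fun y => P (Q y)) = P ∘ Q from rfl, this.fderiv]
    simp [c, Finsupp.single_apply]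
    ring
  · intro h0
    have hnp : ∀ s, deriv P s ≤ 0 := fun s => hPa.deriv_nonpos
    have hz : (fun y => -(2 * deriv P (Q y))) = 0 := by
      refine (Continuous.ae_eq_iff_eq μ (f := fun y => -(2 * deriv P (Q y)))
        hφs.continuous.neg continuous_zero).1 ?_
      rw [← integral_eq_zero_iff_of_nonneg]
      · rw [integral_neg, h0, neg_zero]
      · intro y; have := hnp (Q y); simp only [Pi.zero_apply]; linarith
      · exact (hφs.continuous.integrable_of_hasCompactSupport hφc).neg
    have hd0 : ∀ s, 0 ≤ s → deriv P s = 0 := by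
      intro s hs
      obtain ⟨i0⟩ := ‹Nonempty κ›
      have h := congrFun hz (Real.sqrt s • b i0)
      have hQs : Q (Real.sqrt s • b i0) = s := by
        simp [Q, c, Finsupp.single_apply, Real.sq_sqrt hs]
      rw [hQs] at h
      simpa using h
    have hc1 : P 1 = P 0 := by
      refine constant_of_has_deriv_right_zero (a := 0) (b := 1) hP.continuous.continuousOn ?_ 1
        (by simp)
      intro s hs
      have := (hP.differentiable (by simp) s).hasDerivAt
      rw [hd0 s hs.1] at this
      exact this.hasDerivWithinAt
    simp [P] at hc1

lemma weyl_mean {E A κ : Type*} [NormedAddCommGroup E] [NormedSpace ℝ E]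
    [FiniteDimensional ℝ E] [MeasurableSpace E] [BorelSpace E] [NormedAddCommGroup A]
    [NormedSpace ℝ A] [CompleteSpace A] [Fintype κ] [Nonempty κ]
    (μ : Measure E) [μ.IsAddHaarMeasure] (b : Module.Basis κ ℝ E)
    (u : E → A) (hu : ContDiff ℝ 1 u) (hcu : HasCompactSupport u) (V : Set E) (hV : IsOpen V)
    (z₀ : E) (hz₀ : z₀ ∈ V)
    (hw : ∀ ψ : E → ℝ, ContDiff ℝ ∞ ψ → HasCompactSupport ψ → tsupport ψ ⊆ V →
      ∑ i, ∫ y, fderiv ℝ ψ y (b i) • fderiv ℝ u y (b i) ∂μ = 0) :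
    ContDiffAt ℝ ∞ u z₀ := by
  obtain ⟨ψ, φ, hψ, hφ, hψc, hφc, hψφ, hφ0⟩ := weyl_radial μ b
  obtain ⟨ε, hε, hεV⟩ := Metric.isOpen_iff.1 hV z₀ hz₀
  obtain ⟨R, hRpos, hR⟩ : ∃ R : ℝ, 0 < R ∧ tsupport ψ ⊆ Metric.closedBall 0 R := by
    obtain ⟨R, hR⟩ := hψc.isBounded.subset_closedBall (0 : E)
    exact ⟨max R 1, by positivity, hR.trans (Metric.closedBall_subset_closedBall (le_max_left _ _))⟩
  have hdu : Continuous (fderiv ℝ u) := hu.continuous_fderiv (by simp)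
  obtain ⟨C, hC⟩ := hdu.bounded_above_of_compact_support (hcu.fderiv ℝ)
  let I : E → ℝ → A := fun x δ => ∫ y, φ y • u (x - δ • y) ∂μ
  have hI : ∀ x δ, HasDerivAt (I x) (∫ y, φ y • fderiv ℝ u (x - δ • y) (-y) ∂μ) δ := by
    intro x δ
    refine (hasDerivAt_integral_of_dominated_loc_of_deriv_le (s := univ)
      (F := fun δ y => φ y • u (x - δ • y))
      (F' := fun δ y => φ y • fderiv ℝ u (x - δ • y) (-y))
      (bound := fun y => ‖φ y‖ * (C * ‖y‖)) univ_mem ?_ ?_ ?_ ?_ ?_ ?_).2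
    · refine Eventually.of_forall fun δ => Continuous.aestronglyMeasurable ?_
      exact hφ.continuous.smul (hu.continuous.comp (by fun_prop))
    · apply Continuous.integrable_of_hasCompactSupport
      · exact hφ.continuous.smul (hu.continuous.comp (by fun_prop))
      · exact hφc.smul_right
    · apply Continuous.aestronglyMeasurable
      exact hφ.continuous.smul ((hdu.comp (by fun_prop)).clm_apply continuous_neg)
    · refine Eventually.of_forall fun y δ _ => ?_
      rw [norm_smul]
      gcongr
      refine (ContinuousLinearMap.le_opNorm _ _).trans ?_
      rw [norm_neg]
      gcongr
      exact hC _
    · apply Continuous.integrable_of_hasCompactSupport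
      · exact hφ.continuous.norm.mul (continuous_const.mul continuous_norm)
      · exact hφc.norm.mul_right
    · refine Eventually.of_forall fun y δ _ => ?_
      have h1 : HasDerivAt (fun δ : ℝ => x - δ • y) (-y) δ := by
        have := ((hasDerivAt_id δ).smul_const y).const_sub x
        simpa using this
      have h2 : HasFDerivAt u (fderiv ℝ u (x - δ • y)) (x - δ • y) :=
        (hu.differentiable (by simp) _).hasFDerivAt
      exact (h2.comp_hasDerivAt δ h1).const_smul (φ y)
  let δ₀ : ℝ := ε / (4 * R)
  have hδ₀ : 0 < δ₀ := by positivity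
  have hI0 : ∀ x ∈ Metric.ball z₀ (ε / 2), ∀ δ, 0 < δ → δ ≤ δ₀ →
      ∫ y, φ y • fderiv ℝ u (x - δ • y) (-y) ∂μ = 0 := by
    intro x hx δ hδ hδ'
    let Φ : E → ℝ := fun t => ψ (δ⁻¹ • (x - t))
    have hΦ : ContDiff ℝ ∞ Φ := hψ.comp (by fun_prop)
    have hts : tsupport Φ ⊆ Metric.closedBall x (δ * R) := by
      apply closure_minimal _ Metric.isClosed_closedBall
      intro t ht
      have : δ⁻¹ • (x - t) ∈ tsupport ψ := subset_tsupport _ ht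
      have := hR this
      rw [mem_closedBall_zero_iff, norm_smul, Real.norm_eq_abs, abs_of_pos (inv_pos.2 hδ),
        inv_mul_le_iff₀ hδ] at this
      rwa [Metric.mem_closedBall, dist_comm, dist_eq_norm]
    have hΦc : HasCompactSupport Φ :=
      (isCompact_closedBall x (δ * R)).of_isClosed_subset (isClosed_tsupport _) hts
    have hΦV : tsupport Φ ⊆ V := by
      refine hts.trans (subset_trans ?_ hεV)
      apply Metric.closedBall_subset_ball'
      have h1 : δ * R ≤ ε / 4 := by
        calc δ * R ≤ δ₀ * R := by gcongr
          _ = ε / 4 := by simp only [δ₀]; field_simp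
      have h2 := Metric.mem_ball.1 hx
      linarith
    have hkey := hw Φ hΦ hΦc hΦV
    have hdΦ : ∀ t i, fderiv ℝ Φ t (b i) = -δ⁻¹ * fderiv ℝ ψ (δ⁻¹ • (x - t)) (b i) := by
      intro t i
      have h1 : HasFDerivAt (fun t : E => δ⁻¹ • (x - t)) (δ⁻¹ • (-ContinuousLinearMap.id ℝ E)) t :=
        ((hasFDerivAt_id t).const_sub x).const_smul δ⁻¹
      have h2 := ((hψ.differentiable (by simp) (δ⁻¹ • (x - t))).hasFDerivAt).comp t h1
      rw [show Φ = ψ ∘ (fun t => δ⁻¹ • (x - t)) from rfl, h2.fderiv]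
      simp
    have hint : ∀ i, Integrable (fun y => fderiv ℝ Φ y (b i) • fderiv ℝ u y (b i)) μ := by
      intro i
      apply Continuous.integrable_of_hasCompactSupport
      · exact ((hΦ.continuous_fderiv (by simp)).clm_apply continuous_const).smul
          (hdu.clm_apply continuous_const)
      · exact (hΦc.fderiv_apply ℝ _).smul_right
    rw [← integral_finsetSum _ (fun i _ => hint i)] at hkey
    let W : E → A := fun t => φ (δ⁻¹ • (x - t)) • fderiv ℝ u t (-(δ⁻¹ • (x - t)))
    have hW : ∀ t, ∑ i, fderiv ℝ Φ t (b i) • fderiv ℝ u t (b i) = δ⁻¹ • W t := by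
      intro t
      simp only [W]
      conv_rhs => rw [map_neg, ← b.sum_repr (δ⁻¹ • (x - t)), map_sum]
      rw [b.sum_repr, smul_neg, Finset.smul_sum, smul_neg, Finset.smul_sum, ← Finset.sum_neg_distrib]
      refine Finset.sum_congr rfl fun i _ => ?_
      rw [hdΦ, hψφ, (fderiv ℝ u t).map_smul, smul_smul, smul_smul, ← neg_smul]
      congr 1
      ring
    simp_rw [hW] at hkey
    rw [integral_smul] at hkey
    have hW0 : ∫ t, W t ∂μ = 0 := by
      rcases smul_eq_zero.1 hkey with h | h
      · exact absurd h (inv_ne_zero hδ.ne')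
      · exact h
    have hs : ∀ y, φ y • fderiv ℝ u (x - δ • y) (-y) = W (x - δ • y) := by
      intro y
      simp only [W, sub_sub_cancel, smul_smul, inv_mul_cancel₀ hδ.ne', one_smul]
    simp_rw [hs]
    rw [Measure.integral_comp_smul μ (fun t => W (x - t)) δ, integral_sub_left_eq_self W μ x, hW0,
      smul_zero]
  have hIc : ∀ x ∈ Metric.ball z₀ (ε / 2), I x δ₀ = I x 0 := by
    intro x hx
    have hcont : Continuous (I x) :=
      continuous_iff_continuousAt.2 fun δ => (hI x δ).continuousAt
    have h1 : ∀ η ∈ Ioo 0 δ₀, I x η = I x δ₀ := by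
      intro η hη
      refine (constant_of_has_deriv_right_zero (a := η) (b := δ₀) hcont.continuousOn ?_ δ₀
        ⟨hη.2.le, le_rfl⟩).symm
      intro s hs
      have := hI x s
      rw [hI0 x hx s (hη.1.trans_le hs.1) hs.2.le] at this
      exact this.hasDerivWithinAt
    have h2 : Tendsto (I x) (𝓝[>] 0) (𝓝 (I x 0)) := hcont.continuousAt.mono_left inf_le_left
    have h3 : Tendsto (I x) (𝓝[>] 0) (𝓝 (I x δ₀)) := by
      refine tendsto_const_nhds.congr' ?_
      filter_upwards [Ioo_mem_nhdsGT hδ₀] with η hη using (h1 η hη).symm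
    exact tendsto_nhds_unique h3 h2
  have hIx0 : ∀ x, I x 0 = (∫ y, φ y ∂μ) • u x := by
    intro x
    simp only [I, zero_smul, sub_zero]
    rw [integral_smul_const]
  let g : E → ℝ := fun t => φ (δ₀⁻¹ • t)
  have hg : ContDiff ℝ ∞ g := hφ.comp (by fun_prop)
  have hgc : HasCompactSupport g := hφc.comp_homeomorph (Homeomorph.smulOfNeZero δ₀⁻¹
    (inv_ne_zero hδ₀.ne'))
  have hconv : ContDiff ℝ ∞ (convolution g u (ContinuousLinearMap.lsmul ℝ ℝ) μ) :=
    hgc.contDiff_convolution_left (n := ⊤) _ hg hu.continuous.locallyIntegrable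
  have hIδ : ∀ x, I x δ₀ =
      |(δ₀ ^ Module.finrank ℝ E)⁻¹| • convolution g u (ContinuousLinearMap.lsmul ℝ ℝ) μ x := by
    intro x
    rw [convolution_def]
    simp only [ContinuousLinearMap.lsmul_apply]
    rw [← Measure.integral_comp_smul μ (fun t => g t • u (x - t)) δ₀]
    simp only [I, g, smul_smul, inv_mul_cancel₀ hδ₀.ne', one_smul]
  have hfin : u =ᶠ[𝓝 z₀] fun x => (∫ y, φ y ∂μ)⁻¹ • |(δ₀ ^ Module.finrank ℝ E)⁻¹| •
      convolution g u (ContinuousLinearMap.lsmul ℝ ℝ) μ x := by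
    filter_upwards [Metric.ball_mem_nhds z₀ (half_pos hε)] with x hx
    rw [← hIδ, hIc x hx, hIx0, smul_smul, inv_mul_cancel₀ hφ0, one_smul]
  refine ContDiffAt.congr_of_eventuallyEq ?_ hfin
  exact ((hconv.const_smul _).const_smul _).contDiffAt

/-- Weyl lemma for Clifford type first order systems. -/
lemma weyl_main {A ι : Type*} [NormedAddCommGroup A] [NormedSpace ℝ A]
    [CompleteSpace A] [Fintype ι] [DecidableEq ι]
    (L Lb : ι → A →L[ℝ] A)
    (hL : ∀ s t a, Lb s (L t a) + Lb t (L s a) = if s = t then (2:ℝ) • a else 0)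
    (D : Set ((ι → ℝ) × ℝ)) (hD : IsOpen D)
    (u₁ u₂ : (ι → ℝ) × ℝ → A) (hu₁ : ContDiffOn ℝ 1 u₁ D) (hu₂ : ContDiffOn ℝ 1 u₂ D)
    (h1 : ∀ y ∈ D, ∑ s, L s (fderiv ℝ u₁ y (Pi.single s 1, 0)) = fderiv ℝ u₂ y (0, 1))
    (h2 : ∀ y ∈ D, ∑ s, Lb s (fderiv ℝ u₂ y (Pi.single s 1, 0)) = - fderiv ℝ u₁ y (0, 1)) :
    ∀ z ∈ D, ContDiffAt ℝ ∞ u₁ z := by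
  intro z₀ hz₀
  obtain ⟨ε, hε, hεD⟩ := Metric.isOpen_iff.1 hD z₀ hz₀
  let χ : ContDiffBump z₀ := ⟨ε / 4, ε / 2, by positivity, by linarith⟩
  have hχs : tsupport χ ⊆ D := by
    rw [χ.tsupport_eq]
    exact (Metric.closedBall_subset_ball (by simp only [χ]; linarith)).trans hεD
  have hglob : ∀ u : (ι → ℝ) × ℝ → A, ContDiffOn ℝ 1 u D →
      ContDiff ℝ 1 (fun y => χ y • u y) := by
    intro u hu
    rw [contDiff_iff_contDiffAt]
    intro y
    by_cases hy : y ∈ tsupport χ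
    · exact χ.contDiffAt.smul (hu.contDiffAt (hD.mem_nhds (hχs hy)))
    · have : (fun y => χ y • u y) =ᶠ[𝓝 y] fun _ => 0 := by
        have := notMem_tsupport_iff_eventuallyEq.1 hy
        filter_upwards [this] with t ht
        simp [ht]
      exact contDiffAt_const.congr_of_eventuallyEq this
  have heq : ∀ u : (ι → ℝ) × ℝ → A, ∀ y ∈ Metric.ball z₀ (ε / 4),
      (fun y => χ y • u y) =ᶠ[𝓝 y] u := by
    intro u y hy
    filter_upwards [Metric.isOpen_ball.mem_nhds hy] with t ht
    rw [χ.one_of_mem_closedBall (Metric.ball_subset_closedBall ht), one_smul]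
  have hball : Metric.ball z₀ (ε / 4) ⊆ D :=
    (Metric.ball_subset_ball (by linarith)).trans hεD
  let b : Module.Basis (ι ⊕ Unit) ℝ ((ι → ℝ) × ℝ) :=
    (Pi.basisFun ℝ ι).prod (Module.Basis.singleton Unit ℝ)
  have key : ContDiffAt ℝ ∞ (fun y => χ y • u₁ y) z₀ := by
    refine weyl_mean ((volume : Measure (ι → ℝ)).prod (volume : Measure ℝ)) b _ (hglob u₁ hu₁) χ.hasCompactSupport.smul_right
      (Metric.ball z₀ (ε / 4)) Metric.isOpen_ball z₀ (Metric.mem_ball_self (by linarith)) ?_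
    intro ψ hψ hψc hψV
    have := weyl_weak ((volume : Measure (ι → ℝ)).prod (volume : Measure ℝ)) (fun s : ι => ((Pi.single s 1, 0) : (ι → ℝ) × ℝ)) (0, 1) L Lb hL
      _ _ (hglob u₁ hu₁) (hglob u₂ hu₂) (Metric.ball z₀ (ε / 4)) ?_ ?_ ψ hψ hψc hψV
    · simpa [b, Module.Basis.prod_apply] using this
    · intro y hy
      rw [(heq u₁ y hy).fderiv_eq, (heq u₂ y hy).fderiv_eq]
      exact h1 y (hball hy)
    · intro y hy
      rw [(heq u₁ y hy).fderiv_eq, (heq u₂ y hy).fderiv_eq]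
      exact h2 y (hball hy)
  exact key.congr_of_eventuallyEq (heq u₁ z₀ (Metric.mem_ball_self (by linarith))).symm

end Weyl

section System
open scoped ContDiff

/-- parity with respect to the reflection -/
def Par {A : Type*} [NormedAddCommGroup A] [NormedSpace ℝ A] (p : ℕ)
    (D : Set ((Fin (p + 1) → ℝ) × ℝ)) (σ : ℝ) (G : (Fin (p + 1) → ℝ) × ℝ → A) : Prop :=
  ∀ z ∈ D, G (reflD p z) = σ • G z

section
variable {A : Type*} [NormedAddCommGroup A] [NormedSpace ℝ A] {p : ℕ}
  {D : Set ((Fin (p + 1) → ℝ) × ℝ)} {σ : ℝ} {G : (Fin (p + 1) → ℝ) × ℝ → A}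

lemma par_fderiv (hD : IsOpen D) (h : Par p D σ G) (z : (Fin (p + 1) → ℝ) × ℝ) (hz : z ∈ D)
    (w : (Fin (p + 1) → ℝ) × ℝ) :
    fderiv ℝ G (reflD p z) (reflD p w) = σ • fderiv ℝ G z w := by
  let e : ((Fin (p + 1) → ℝ) × ℝ) ≃L[ℝ] ((Fin (p + 1) → ℝ) × ℝ) :=
    (ContinuousLinearEquiv.refl ℝ _).prodCongr (ContinuousLinearEquiv.neg ℝ)
  have he : ∀ y, e y = reflD p y := fun y => rfl
  have h1 : (G ∘ e) =ᶠ[𝓝 z] fun y => σ • G y := by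
    filter_upwards [hD.mem_nhds hz] with y hy
    exact h y hy
  have h2 := e.comp_right_fderiv (f := G) (x := z)
  rw [h1.fderiv_eq] at h2
  have h3 : fderiv ℝ (fun y => σ • G y) z = σ • fderiv ℝ G z :=
    congrFun (fderiv_const_smul_field (𝕜 := ℝ) (f := G) σ) z
  rw [h3] at h2
  have := congrArg (fun l => l w) h2
  simpa [he] using this.symm

lemma par_pdSr (hD : IsOpen D) (h : Par p D σ G) : Par p D (-σ) (pdSr p G) := by
  intro z hz
  have := par_fderiv hD h z hz (0, 1)
  have h2 : reflD p ((0 : Fin (p + 1) → ℝ), (1 : ℝ)) = -((0 : Fin (p + 1) → ℝ), (1 : ℝ)) := by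
    simp [reflD]
  rw [h2, map_neg] at this
  simp only [pdSr]
  rw [neg_smul, ← this, neg_neg]

lemma par_pdSr2 (hD : IsOpen D) (h : Par p D σ G) : Par p D σ (pdSr2 p G) := by
  have := par_pdSr hD (par_pdSr hD h)
  rw [neg_neg] at this
  exact this

lemma par_T1 (hD : IsOpen D) (h : Par p D σ G) : Par p D σ (T1 p G) := by
  intro z hz
  by_cases h0 : z.2 = 0
  · have h0' : (reflD p z).2 = 0 := by simp [reflD, h0]
    simp only [T1, h0, h0', if_true]
    exact par_pdSr2 hD h z hz
  · have h0' : (reflD p z).2 ≠ 0 := by simpa [reflD] using h0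
    simp only [T1, h0, h0', if_false]
    rw [par_pdSr hD h z hz, smul_comm σ]
    simp [reflD, inv_neg]

lemma par_T2 (hD : IsOpen D) (h : Par p D σ G) : Par p D σ (T2 p G) := by
  intro z hz
  by_cases h0 : z.2 = 0
  · have h0' : (reflD p z).2 = 0 := by simp [reflD, h0]
    simp only [T2, h0, h0', if_true]
    rw [par_pdSr2 hD h z hz, smul_comm]
  · have h0' : (reflD p z).2 ≠ 0 := by simpa [reflD] using h0
    simp only [T2, h0, h0', if_false, fderiv_apply_one_eq_deriv]
    let g : ℝ → A := fun t => t⁻¹ • G (z.1, t)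
    have h1 : (fun t => g (-t)) =ᶠ[𝓝 z.2] fun t => (-σ) • g t := by
      have : ∀ᶠ t in 𝓝 z.2, (z.1, t) ∈ D :=
        (Continuous.prodMk_right z.1).continuousAt.eventually (hD.mem_nhds hz)
      filter_upwards [this] with t ht
      have := h _ ht
      simp only [reflD] at this
      simp only [g, this]
      rw [smul_comm]
      simp [inv_neg]
    have h2 := h1.deriv_eq
    rw [deriv_comp_neg] at h2
    have h3 : deriv (fun t => (-σ) • g t) z.2 = (-σ) • deriv g z.2 := deriv_const_smul_field _ _
    rw [h3, neg_smul, neg_inj] at h2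
    exact h2

lemma par_T1_iter (hD : IsOpen D) (h : Par p D σ G) (k : ℕ) : Par p D σ ((T1 p)^[k] G) := by
  induction k with
  | zero => exact h
  | succ k ih => rw [Function.iterate_succ_apply']; exact par_T1 hD ih

lemma par_T2_iter (hD : IsOpen D) (h : Par p D σ G) (k : ℕ) : Par p D σ ((T2 p)^[k] G) := by
  induction k with
  | zero => exact h
  | succ k ih => rw [Function.iterate_succ_apply']; exact par_T2 hD ih

lemma zero_of_self_eq_neg {x : A} (h : x = -x) : x = 0 := by
  have h2 : (2 : ℝ) • x = 0 := by
    rw [two_smul]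
    nth_rewrite 1 [h]
    simp
  exact (smul_eq_zero.1 h2).resolve_left two_ne_zero

lemma even_pdSr_zero (hD : IsOpen D) (h : Par p D 1 G) (z : (Fin (p + 1) → ℝ) × ℝ) (hz : z ∈ D)
    (h0 : z.2 = 0) : pdSr p G z = 0 := by
  have := par_pdSr hD h z hz
  have hr : reflD p z = z := by
    ext <;> simp [reflD, h0]
  rw [hr, neg_smul, one_smul] at this
  exact zero_of_self_eq_neg this

lemma odd_pdSx_zero (hD : IsOpen D) (h : Par p D (-1) G) (z : (Fin (p + 1) → ℝ) × ℝ) (hz : z ∈ D)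
    (h0 : z.2 = 0) (s : Fin (p + 1)) : pdSx p s G z = 0 := by
  have := par_fderiv hD h z hz (Pi.single s 1, 0)
  have hr : reflD p z = z := by
    ext <;> simp [reflD, h0]
  have hr' : reflD p (Pi.single s 1, 0) = (Pi.single s 1, 0) := by
    simp [reflD]
  rw [hr, hr', neg_smul, one_smul] at this
  exact zero_of_self_eq_neg this

/-- first order operator with constant operator coefficients -/
noncomputable def Dk (K : Fin (p + 1) → A →L[ℝ] A) (G : (Fin (p + 1) → ℝ) × ℝ → A)
    (z : (Fin (p + 1) → ℝ) × ℝ) : A := ∑ s, K s (fderiv ℝ G z (Pi.single s 1, 0))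

lemma Dk_congr (K : Fin (p + 1) → A →L[ℝ] A) {G G' : (Fin (p + 1) → ℝ) × ℝ → A}
    {z : (Fin (p + 1) → ℝ) × ℝ} (h : G =ᶠ[𝓝 z] G') : Dk K G z = Dk K G' z := by
  simp only [Dk, h.fderiv_eq]

lemma pdSr_congr {G G' : (Fin (p + 1) → ℝ) × ℝ → A}
    {z : (Fin (p + 1) → ℝ) × ℝ} (h : G =ᶠ[𝓝 z] G') : pdSr p G z = pdSr p G' z := by
  simp only [pdSr, h.fderiv_eq]

lemma smooth_fderiv {z : (Fin (p + 1) → ℝ) × ℝ} (hG : ContDiffAt ℝ ∞ G z)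
    (a : (Fin (p + 1) → ℝ) × ℝ) : ContDiffAt ℝ ∞ (fun y => fderiv ℝ G y a) z :=
  (hG.fderiv_right (m := ∞) (by simp)).clm_apply contDiffAt_const

lemma fderiv_comm {z : (Fin (p + 1) → ℝ) × ℝ} (hG : ContDiffAt ℝ ∞ G z)
    (a b : (Fin (p + 1) → ℝ) × ℝ) :
    fderiv ℝ (fun y => fderiv ℝ G y a) z b = fderiv ℝ (fun y => fderiv ℝ G y b) z a := by
  have hd : DifferentiableAt ℝ (fderiv ℝ G) z :=
    (hG.fderiv_right (m := ∞) (by simp)).differentiableAt (by simp)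
  have : ∀ a b, fderiv ℝ (fun y => fderiv ℝ G y a) z b = fderiv ℝ (fderiv ℝ G) z b a := by
    intro a b
    rw [fderiv_clm_apply hd (differentiableAt_const _)]
    simp
  rw [this, this]
  have hs : IsSymmSndFDerivAt ℝ G z := hG.isSymmSndFDerivAt (by
    rw [minSmoothness_of_isRCLikeNormedField]; exact WithTop.coe_le_coe.2 (le_top (a := (2 : ℕ∞))))
  rw [hs b a]

lemma Dk_pdSr (K : Fin (p + 1) → A →L[ℝ] A) {z : (Fin (p + 1) → ℝ) × ℝ}
    (hG : ContDiffAt ℝ ∞ G z) : Dk K (pdSr p G) z = pdSr p (Dk K G) z := by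
  have h1 : HasFDerivAt (Dk K G)
      (∑ s, (K s).comp (fderiv ℝ (fun y => fderiv ℝ G y (Pi.single s 1, 0)) z)) z := by
    apply HasFDerivAt.fun_sum
    intro s _
    exact (K s).hasFDerivAt.comp z
      ((smooth_fderiv hG (Pi.single s 1, 0)).differentiableAt (by simp)).hasFDerivAt
  simp only [pdSr, h1.fderiv]
  simp only [Dk, sum_apply, ContinuousLinearMap.comp_apply]
  refine Finset.sum_congr rfl fun s _ => ?_
  rw [← fderiv_comm hG]
  rfl

lemma fd_smul {z : (Fin (p + 1) → ℝ) × ℝ} (h : ℝ → ℝ) (hh : DifferentiableAt ℝ h z.2)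
    (hG : DifferentiableAt ℝ G z) (w : (Fin (p + 1) → ℝ) × ℝ) :
    fderiv ℝ (fun y : (Fin (p + 1) → ℝ) × ℝ => h y.2 • G y) z w
      = h z.2 • fderiv ℝ G z w + (deriv h z.2 * w.2) • G z := by
  have h1 : HasFDerivAt (fun y : (Fin (p + 1) → ℝ) × ℝ => h y.2)
      (deriv h z.2 • ContinuousLinearMap.snd ℝ (Fin (p + 1) → ℝ) ℝ) z :=
    hh.hasDerivAt.comp_hasFDerivAt z hasFDerivAt_snd
  have := (h1.smul hG.hasFDerivAt).fderiv
  rw [show (fun y : (Fin (p + 1) → ℝ) × ℝ => h y.2 • G y)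
    = (fun y : (Fin (p + 1) → ℝ) × ℝ => h y.2) • G from rfl, this]
  simp

lemma T1_eq {z : (Fin (p + 1) → ℝ) × ℝ} (h0 : z.2 ≠ 0) :
    T1 p G =ᶠ[𝓝 z] fun y => (y.2)⁻¹ • pdSr p G y := by
  have : ∀ᶠ y : (Fin (p + 1) → ℝ) × ℝ in 𝓝 z, y.2 ≠ 0 :=
    continuous_snd.continuousAt.eventually_ne h0
  filter_upwards [this] with y hy
  simp [T1, hy]

lemma T2_eq {z : (Fin (p + 1) → ℝ) × ℝ} (h0 : z.2 ≠ 0) (hG : ContDiffAt ℝ ∞ G z) :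
    T2 p G =ᶠ[𝓝 z] pdSr p (fun y => (y.2)⁻¹ • G y) := by
  have h1 : ∀ᶠ y : (Fin (p + 1) → ℝ) × ℝ in 𝓝 z, y.2 ≠ 0 :=
    continuous_snd.continuousAt.eventually_ne h0
  have h2 : ∀ᶠ y in 𝓝 z, ContDiffAt ℝ 1 G y :=
    (hG.of_le (by exact_mod_cast le_top)).eventually (by simp)
  filter_upwards [h1, h2] with y hy hGy
  simp only [T2, hy, if_false, pdSr]
  have hd : DifferentiableAt ℝ (fun y : (Fin (p + 1) → ℝ) × ℝ => (y.2)⁻¹ • G y) y :=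
    (differentiableAt_snd.inv hy).smul (hGy.differentiableAt (by simp))
  have hc : HasFDerivAt (fun t : ℝ => (y.1, t)) (ContinuousLinearMap.inr ℝ (Fin (p + 1) → ℝ) ℝ)
      y.2 := hasFDerivAt_prodMk_right y.1 y.2
  have := HasFDerivAt.comp y.2 (g := fun y : (Fin (p + 1) → ℝ) × ℝ => (y.2)⁻¹ • G y)
    hd.hasFDerivAt hc
  have h3 := this.fderiv
  simp only [Function.comp_def] at h3
  rw [h3]
  simp

lemma system_aux (hD : IsOpen D) (L Lb : Fin (p + 1) → A →L[ℝ] A)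
    (F₁ F₂ : (Fin (p + 1) → ℝ) × ℝ → A)
    (hF₁ : ∀ z ∈ D, ContDiffAt ℝ ∞ F₁ z) (hF₂ : ∀ z ∈ D, ContDiffAt ℝ ∞ F₂ z)
    (h1 : ∀ z ∈ D, Dk L F₁ z - pdSr p F₂ z = 0)
    (h2 : ∀ z ∈ D, Dk Lb F₂ z + pdSr p F₁ z = 0) (k : ℕ) :
    ∀ z ∈ D, z.2 ≠ 0 → ContDiffAt ℝ ∞ ((T1 p)^[k] F₁) z ∧ ContDiffAt ℝ ∞ ((T2 p)^[k] F₂) z ∧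
      Dk L ((T1 p)^[k] F₁) z - pdSr p ((T2 p)^[k] F₂) z =
        ((2 * (k : ℝ)) / z.2) • ((T2 p)^[k] F₂) z ∧
      Dk Lb ((T2 p)^[k] F₂) z + pdSr p ((T1 p)^[k] F₁) z = 0 := by
  induction k with
  | zero =>
    intro z hz _
    refine ⟨hF₁ z hz, hF₂ z hz, ?_, h2 z hz⟩
    simpa using h1 z hz
  | succ k ih =>
    intro z hz h0
    simp only [Function.iterate_succ_apply']
    set a := (T1 p)^[k] F₁
    set b := (T2 p)^[k] F₂
    have hev : ∀ᶠ y in 𝓝 z, y ∈ D ∧ y.2 ≠ 0 :=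
      Filter.Eventually.and (hD.mem_nhds hz)
        (continuous_snd.continuousAt.eventually_ne h0)
    obtain ⟨ha, hb, -, -⟩ := ih z hz h0
    have hT1 := T1_eq (G := a) h0
    have hT2 := T2_eq h0 hb
    set c : (Fin (p + 1) → ℝ) × ℝ → A := fun y => (y.2)⁻¹ • b y with hcdef
    have hcs : ∀ y ∈ D, y.2 ≠ 0 → ContDiffAt ℝ ∞ c y := fun y hy hy0 =>
      (contDiffAt_snd.inv hy0).smul (ih y hy hy0).2.1
    have hc := hcs z hz h0
    have hpa : ContDiffAt ℝ ∞ (pdSr p a) z := smooth_fderiv ha _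
    have hpc : ContDiffAt ℝ ∞ (pdSr p c) z := smooth_fderiv hc _
    have hinv : ∀ y : (Fin (p + 1) → ℝ) × ℝ, y.2 ≠ 0 →
        DifferentiableAt ℝ (fun t : ℝ => t⁻¹) y.2 := fun y hy => differentiableAt_inv hy
    refine ⟨?_, ?_, ?_, ?_⟩
    · exact ((contDiffAt_snd.inv h0).smul hpa).congr_of_eventuallyEq hT1
    · exact hpc.congr_of_eventuallyEq hT2
    · rw [Dk_congr L hT1, pdSr_congr hT2, hT2.eq_of_nhds]
      have e1 : Dk L (fun y => (y.2)⁻¹ • pdSr p a y) z = (z.2)⁻¹ • Dk L (pdSr p a) z := by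
        simp only [Dk, Finset.smul_sum]
        refine Finset.sum_congr rfl fun s _ => ?_
        rw [fd_smul (fun t => t⁻¹) (hinv z h0) (hpa.differentiableAt (by simp))]
        simp
      have e2 : Dk L a =ᶠ[𝓝 z] fun y => (2 * (k : ℝ) + 1) • c y + y.2 • pdSr p c y := by
        filter_upwards [hev, hev.eventually_nhds] with y hy hy'
        have h3 := (ih y hy.1 hy.2).2.2.1
        have hbc : b =ᶠ[𝓝 y] fun w => w.2 • c w := by
          filter_upwards [hy'] with w hw
          simp only [c]
          rw [smul_smul, mul_inv_cancel₀ hw.2, one_smul]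
        have h4 : pdSr p b y = y.2 • pdSr p c y + c y := by
          rw [pdSr_congr hbc]
          simp only [pdSr]
          rw [fd_smul (fun t => t) differentiableAt_id
            ((hcs y hy.1 hy.2).differentiableAt (by simp))]
          simp
        rw [sub_eq_iff_eq_add, h4] at h3
        rw [h3, add_smul, one_smul, div_eq_mul_inv, mul_smul]
        simp only [c]
        abel
      rw [e1, Dk_pdSr L ha, pdSr_congr e2]
      have e3 : pdSr p (fun y => (2 * (k : ℝ) + 1) • c y + y.2 • pdSr p c y) z
          = (2 * (k : ℝ) + 2) • pdSr p c z + z.2 • pdSr p (pdSr p c) z := by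
        have d1 : DifferentiableAt ℝ c z := hc.differentiableAt (by simp)
        have d2 : DifferentiableAt ℝ (pdSr p c) z := hpc.differentiableAt (by simp)
        have d3 := fd_smul (fun t => t) differentiableAt_id d2 (0, 1)
        conv_lhs => rw [pdSr]
        have d4 : DifferentiableAt ℝ (fun y => (2 * (k : ℝ) + 1) • c y) z := d1.const_smul _
        have d5 : DifferentiableAt ℝ
            (fun y : (Fin (p + 1) → ℝ) × ℝ => y.2 • pdSr p c y) z := differentiableAt_snd.smul d2
        rw [fderiv_fun_add d4 d5,
          add_apply, d3, fderiv_fun_const_smul d1]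
        simp only [smul_apply, deriv_id'', one_mul, one_smul]
        simp only [pdSr]
        module
      rw [e3, smul_add, smul_smul, smul_smul, inv_mul_cancel₀ h0, one_smul, add_sub_cancel_right]
      congr 1
      push_cast
      field_simp
      try ring
    · rw [Dk_congr Lb hT2, Dk_pdSr Lb hc]
      have e1 : Dk Lb c =ᶠ[𝓝 z] fun y => -(T1 p a y) := by
        filter_upwards [hev] with y hy
        have h3 := (ih y hy.1 hy.2).2.2.2
        have h4 : Dk Lb c y = (y.2)⁻¹ • Dk Lb b y := by
          simp only [Dk, Finset.smul_sum]
          refine Finset.sum_congr rfl fun s _ => ?_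
          rw [hcdef, fd_smul (fun t => t⁻¹) (hinv y hy.2)
            ((ih y hy.1 hy.2).2.1.differentiableAt (by simp))]
          simp
        rw [h4, eq_neg_of_add_eq_zero_left h3]
        simp [T1, hy.2]
      rw [pdSr_congr e1]
      simp only [pdSr]
      rw [fderiv_fun_neg]
      simp

end

end System

/-- For `f = F₁ + ωF₂ ∈ GSR(Ω_D)`, setting `A_k = ((1/r)∂_r)^k F₁` and
`B_k = (∂_r ∘ (1/r))^k F₂` (with values at `r = 0` given by the limits), we have
`D_{x_p} A_k - ∂_r B_k = (2k/r) B_k` (for `r ≠ 0`) and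
`D̄_{x_p} B_k + ∂_r A_k = 0` on `D`. -/
theorem ak_bk_system
    {A : Type*} [NormedAddCommGroup A] [NormedSpace ℝ A] [Mul A] [One A]
    (conj : A → A) (H : IsAltStarAlg A conj)
    (v : ℕ → A) (m p : ℕ) (hv : IsHypBasis A conj v m) (hp : p < m)
    (D : Set ((Fin (p + 1) → ℝ) × ℝ)) (hD : IsOpen D)
    (hDrefl : ∀ z ∈ D, reflD p z ∈ D)
    (F₁ F₂ : (Fin (p + 1) → ℝ) × ℝ → A) (hstem : IsStem p D F₁ F₂)
    (hF₁ : ContDiffOn ℝ 1 F₁ D) (hF₂ : ContDiffOn ℝ 1 F₂ D)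
    (f : (Fin (m + 1) → ℝ) → A) (hind : Induced v m p D F₁ F₂ f)
    (hCR : StemCR v p D F₁ F₂) (k : ℕ) :
    (∀ z ∈ D, z.2 ≠ 0 →
      DopSx v p ((T1 p)^[k] F₁) z - pdSr p ((T2 p)^[k] F₂) z =
        ((2 * (k : ℝ)) / z.2) • ((T2 p)^[k] F₂) z) ∧
    (∀ z ∈ D,
      DbaropSx v p ((T2 p)^[k] F₂) z + pdSr p ((T1 p)^[k] F₁) z = 0) := by
  have := H.finDim
  have : CompleteSpace A := FiniteDimensional.complete ℝ A
  have mul_neg' : ∀ a b : A, a * (-b) = -(a * b) := by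
    intro a b
    have := H.mul_smul' (-1) a b
    simpa using this
  have neg_mul' : ∀ a b : A, (-a) * b = -(a * b) := by
    intro a b
    have := H.smul_mul' (-1) a b
    simpa using this
  let L : Fin (p + 1) → A →L[ℝ] A := fun s => LinearMap.toContinuousLinearMap
    { toFun := fun a => v (s : ℕ) * a
      map_add' := H.mul_add' _
      map_smul' := fun r a => H.mul_smul' r _ a }
  have hLa : ∀ s a, L s a = v (s : ℕ) * a := fun s a => rfl
  let Lb : Fin (p + 1) → A →L[ℝ] A := fun s => if s = 0 then L s else -L s
  have hL0 : ∀ a, L 0 a = a := by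
    intro a
    rw [hLa]
    simp [hv.v_zero, H.one_mul']
  have hLb0 : ∀ a, Lb 0 a = a := by
    intro a; simp [Lb, hL0]
  have hLbs : ∀ s, s ≠ 0 → ∀ a, Lb s a = - L s a := by
    intro s hs a; simp [Lb, hs]
  have hsq : ∀ s : Fin (p + 1), s ≠ 0 → ∀ a, L s (L s a) = -a := by
    intro s hs a
    have h1 : 1 ≤ (s : ℕ) := Nat.one_le_iff_ne_zero.2 (fun h => hs (Fin.ext h))
    have h2 : (s : ℕ) ≤ m := by have := s.2; omega
    have h3 := hv.norm_one s h1 h2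
    rw [eq_neg_of_add_eq_zero_right (hv.trace_zero s h1 h2), mul_neg'] at h3
    rw [hLa, hLa, H.alt_left, ← neg_neg (v (s : ℕ) * v (s : ℕ)), h3, neg_mul', H.one_mul']
  have hanti : ∀ s t : Fin (p + 1), s ≠ 0 → t ≠ 0 → s ≠ t → ∀ a,
      L s (L t a) + L t (L s a) = 0 := by
    intro s t hs ht hst a
    have h1 : 1 ≤ (s : ℕ) := Nat.one_le_iff_ne_zero.2 (fun h => hs (Fin.ext h))
    have h2 : (s : ℕ) ≤ m := by have := s.2; omega
    have h1' : 1 ≤ (t : ℕ) := Nat.one_le_iff_ne_zero.2 (fun h => ht (Fin.ext h))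
    have h2' : (t : ℕ) ≤ m := by have := t.2; omega
    have h3 := hv.anticomm s t h1 h2 h1' h2' (fun h => hst (Fin.ext h))
    have h4 := H.alt_left (v (s : ℕ) + v (t : ℕ)) a
    have h5 := H.alt_left (v (s : ℕ)) a
    have h6 := H.alt_left (v (t : ℕ)) a
    simp only [H.add_mul', H.mul_add', h5, h6, h3, neg_mul'] at h4
    simp only [hLa]
    have : v (s : ℕ) * (v (t : ℕ) * a) + v (t : ℕ) * (v (s : ℕ) * a)
      = (v (s : ℕ) * v (s : ℕ) * a + v (s : ℕ) * (v (t : ℕ) * a) +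
        (v (t : ℕ) * (v (s : ℕ) * a) + v (t : ℕ) * v (t : ℕ) * a))
        - (v (s : ℕ) * v (s : ℕ) * a + v (t : ℕ) * v (t : ℕ) * a) := by abel
    rw [this, sub_eq_zero]
    first
      | (rw [h4]; abel)
      | (have h7 := h4; abel_nf at h7 ⊢; exact h7)
  have hrel : ∀ s t a, Lb s (L t a) + Lb t (L s a) = if s = t then (2:ℝ) • a else 0 := by
    intro s t a
    by_cases hst : s = t
    · subst hst
      rw [if_pos rfl, two_smul]
      by_cases hs : s = 0
      · subst hs; simp [hLb0, hL0]
      · simp [hLbs s hs, hsq s hs]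
    · rw [if_neg hst]
      by_cases hs : s = 0
      · subst hs
        rw [hLb0, hLbs t (Ne.symm hst), hL0]; simp
      · by_cases ht : t = 0
        · subst ht
          rw [hLb0, hLbs s hs, hL0]; simp
        · rw [hLbs s hs, hLbs t ht, ← neg_add, hanti s t hs ht hst, neg_zero]
  have hrel' : ∀ s t a, L s (Lb t a) + L t (Lb s a) = if s = t then (2:ℝ) • a else 0 := by
    intro s t a
    by_cases hst : s = t
    · subst hst
      rw [if_pos rfl, two_smul]
      by_cases hs : s = 0
      · subst hs; simp [hLb0, hL0]
      · simp [hLbs s hs, hsq s hs]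
    · rw [if_neg hst]
      by_cases hs : s = 0
      · subst hs
        rw [hLb0, hLbs t (Ne.symm hst), hL0]; simp
      · by_cases ht : t = 0
        · subst ht
          rw [hLb0, hLbs s hs, hL0]; simp
        · rw [hLbs s hs, hLbs t ht, map_neg, map_neg, ← neg_add, hanti s t hs ht hst, neg_zero]
  have hDop : ∀ G z, DopSx v p G z = Dk L G z := fun G z => rfl
  have hDbar : ∀ G z, DbaropSx v p G z = Dk Lb G z := by
    intro G z
    simp only [DbaropSx, Dk, pdSx]
    rw [Fin.sum_univ_succ, Fin.sum_univ_succ (f := fun s => Lb s _), hLb0]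
    rw [sub_eq_add_neg, if_neg (by simp), zero_add, ← Finset.sum_neg_distrib]
    congr 1
  have hc1 : ∀ z ∈ D, Dk L F₁ z - pdSr p F₂ z = 0 := fun z hz => (hCR z hz).1
  have hc2 : ∀ z ∈ D, Dk Lb F₂ z + pdSr p F₁ z = 0 := fun z hz => by
    rw [← hDbar]; exact (hCR z hz).2
  have hs1 := weyl_main L Lb hrel D hD F₁ F₂ hF₁ hF₂
    (fun y hy => sub_eq_zero.1 (hc1 y hy)) (fun y hy => eq_neg_of_add_eq_zero_left (hc2 y hy))
  have hs2 := weyl_main Lb L hrel' D hD F₂ (fun y => -F₁ y) hF₂ hF₁.neg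
    (fun y hy => by
      rw [fderiv_fun_neg]
      exact eq_neg_of_add_eq_zero_left (hc2 y hy))
    (fun y hy => by
      rw [fderiv_fun_neg]
      have := sub_eq_zero.1 (hc1 y hy)
      simp only [Dk, pdSr] at this
      simp [← this])
  have hsys := system_aux hD L Lb F₁ F₂ hs1 hs2 hc1 hc2 k
  refine ⟨fun z hz h0 => (hsys z hz h0).2.2.1, fun z hz => ?_⟩
  by_cases h0 : z.2 = 0
  · have hpA : Par p D 1 ((T1 p)^[k] F₁) := par_T1_iter hD
      (fun z hz => by rw [one_smul]; exact (hstem z hz).1) k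
    have hpB : Par p D (-1) ((T2 p)^[k] F₂) := par_T2_iter hD
      (fun z hz => by rw [neg_smul, one_smul]; exact (hstem z hz).2) k
    rw [hDbar, even_pdSr_zero hD hpA z hz h0, add_zero]
    refine Finset.sum_eq_zero fun s _ => ?_
    have := odd_pdSx_zero hD hpB z hz h0 s
    simp only [pdSx] at this
    rw [this, map_zero]
  · rw [hDbar]
    exact (hsys z hz h0).2.2.2

end GPSM
end

section
/- Let f ∈ GS¹(Ω_D) ∩ C¹(Ω_D, 𝔸). Then the following hold on Ω_D ∖ ℝ^{p+1}: (i) Γf(x) = (q−1) x_q f′_s(x), where Γ is the spherical Dirac operator Γf = −(1/2) Σ_{i,j=p+1}^{p+q} v_i(v_j(L_{ij} f)) with L_{ij} = x_i ∂_{x_j} − x_j ∂_{x_i}; (ii) (D_x − D_ω) f(x) = (1−q) f′_s(x), where D_ω f = (D_{x_p} + ω∂_r) f is the slice Cauchy–Riemann operator. -/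
open scoped BigOperators
open Filter Topology

namespace GPSM

variable (A : Type*) [NormedAddCommGroup A] [NormedSpace ℝ A] [Mul A] [One A]

variable {A}

section helpers

theorem alg_a {R ι : Type*} [Ring R] [Algebra ℝ R] [DecidableEq ι] (S : Finset ι) (T : ι → R)
    (x : ι → ℝ) (h1 : ∀ i ∈ S, T i * T i = -1)
    (h2 : ∀ i ∈ S, ∀ j ∈ S, i ≠ j → T i * T j = -(T j * T i)) (i : ι) (hi : i ∈ S) :
    (∑ j ∈ S, x j • T j) * T i = -(T i * ∑ j ∈ S, x j • T j) - (2 * x i) • (1 : R) := by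
  have : (∑ j ∈ S, x j • T j) * T i + T i * ∑ j ∈ S, x j • T j = -((2 * x i) • (1 : R)) := by
    rw [Finset.sum_mul, Finset.mul_sum, ← Finset.sum_add_distrib,
      Finset.sum_eq_single_of_mem i hi]
    · rw [smul_mul_assoc, mul_smul_comm, h1 i hi]
      module
    · intro j hj hji
      rw [smul_mul_assoc, mul_smul_comm, h2 j hj i hi hji]
      module
  rw [← sub_eq_zero] at this ⊢
  rw [← this]; abel

theorem alg_b {R ι : Type*} [Ring R] [Algebra ℝ R] [DecidableEq ι] (S : Finset ι) (T : ι → R)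
    (x : ι → ℝ) (h1 : ∀ i ∈ S, T i * T i = -1)
    (h2 : ∀ i ∈ S, ∀ j ∈ S, i ≠ j → T i * T j = -(T j * T i)) :
    (∑ j ∈ S, x j • T j) * (∑ j ∈ S, x j • T j) = -((∑ i ∈ S, x i ^ 2) • (1 : R)) := by
  set X := ∑ j ∈ S, x j • T j with hX
  have h : X * X = -(X * X) - (2 * ∑ i ∈ S, x i ^ 2) • (1 : R) := by
    calc X * X = ∑ i ∈ S, x i • (X * T i) := by
          conv_lhs => rw [hX, Finset.mul_sum]
          simp only [mul_smul_comm, ← hX]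
      _ = ∑ i ∈ S, (-((x i • T i) * X) - (2 * x i ^ 2) • (1 : R)) := by
          refine Finset.sum_congr rfl fun i hi => ?_
          rw [alg_a S T x h1 h2 i hi, smul_mul_assoc]
          module
      _ = _ := by
          rw [Finset.sum_sub_distrib, Finset.sum_neg_distrib, ← Finset.sum_mul, ← hX,
            ← Finset.sum_smul, ← Finset.mul_sum]
  have h' : (2 : ℝ) • (X * X) = (2 : ℝ) • (-((∑ i ∈ S, x i ^ 2) • (1 : R))) := by
    rw [two_smul]; nth_rewrite 1 [h]; module
  exact smul_right_injective R (two_ne_zero (α := ℝ)) h'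

theorem alg_c {R ι : Type*} [Ring R] [Algebra ℝ R] [DecidableEq ι] (S : Finset ι) (T : ι → R)
    (x : ι → ℝ) (h1 : ∀ i ∈ S, T i * T i = -1)
    (h2 : ∀ i ∈ S, ∀ j ∈ S, i ≠ j → T i * T j = -(T j * T i)) :
    ∑ i ∈ S, T i * ((∑ j ∈ S, x j • T j) * T i) =
      ((S.card : ℝ) - 2) • ∑ j ∈ S, x j • T j := by
  set X := ∑ j ∈ S, x j • T j with hX
  calc _ = ∑ i ∈ S, (X - (2 : ℝ) • (x i • T i)) := by
        refine Finset.sum_congr rfl fun i hi => ?_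
        rw [alg_a S T x h1 h2 i hi, mul_sub, mul_neg, ← mul_assoc, h1 i hi, mul_smul_comm, mul_one,
          neg_mul, one_mul]
        module
    _ = _ := by
        rw [Finset.sum_sub_distrib, ← Finset.smul_sum, ← hX, Finset.sum_const,
          ← Nat.cast_smul_eq_nsmul ℝ]
        module

theorem alg_d {R ι : Type*} [Ring R] [Algebra ℝ R] [DecidableEq ι] (S : Finset ι) (T : ι → R)
    (x : ι → ℝ) (h1 : ∀ i ∈ S, T i * T i = -1)
    (h2 : ∀ i ∈ S, ∀ j ∈ S, i ≠ j → T i * T j = -(T j * T i)) :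
    ∑ i ∈ S, ∑ j ∈ S, T i * (T j * (x i • T j - x j • T i)) =
      (2 - 2 * (S.card : ℝ)) • ∑ j ∈ S, x j • T j := by
  have hc := alg_c S T x h1 h2
  have : ∀ i ∈ S, ∑ j ∈ S, T i * (T j * (x i • T j - x j • T i)) =
      -((S.card : ℝ) • (x i • T i)) - T i * ((∑ j ∈ S, x j • T j) * T i) := by
    intro i hi
    rw [Finset.sum_mul, Finset.mul_sum, Nat.cast_smul_eq_nsmul ℝ, ← Finset.sum_const, ← Finset.sum_neg_distrib,
      ← Finset.sum_sub_distrib]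
    refine Finset.sum_congr rfl fun j hj => ?_
    rw [mul_sub, mul_smul_comm, h1 j hj, mul_sub, mul_smul_comm, mul_neg, mul_one, mul_smul_comm,
      smul_mul_assoc, smul_neg]
  rw [Finset.sum_congr rfl this, Finset.sum_sub_distrib, hc, Finset.sum_neg_distrib,
    ← Finset.smul_sum]
  module

variable {A : Type*} [NormedAddCommGroup A] [NormedSpace ℝ A] [Mul A] [One A]

/-- The multiplication as a continuous bilinear map. -/
noncomputable def mulB {conj : A → A} (H : IsAltStarAlg A conj) : A →L[ℝ] A →L[ℝ] A :=
  haveI := H.finDim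
  LinearMap.toContinuousLinearMap
    ((LinearMap.toContinuousLinearMap : (A →ₗ[ℝ] A) ≃ₗ[ℝ] (A →L[ℝ] A)).toLinearMap ∘ₗ
      LinearMap.mk₂ ℝ (fun a b : A => a * b) H.add_mul' H.smul_mul' H.mul_add' H.mul_smul')

theorem mulB_apply {conj : A → A} (H : IsAltStarAlg A conj) (a b : A) :
    a * b = mulB H a b := rfl

theorem mulB_sq {conj : A → A} (H : IsAltStarAlg A conj) {v : ℕ → A} {m : ℕ}
    (hv : IsHypBasis A conj v m) (s : ℕ) (h1 : 1 ≤ s) (h2 : s ≤ m) :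
    mulB H (v s) * mulB H (v s) = -1 := by
  ext a
  have hc : conj (v s) = -v s := by
    have := hv.trace_zero s h1 h2
    exact (neg_eq_of_add_eq_zero_right this).symm
  have h := hv.norm_one s h1 h2
  rw [hc, mulB_apply H, map_neg] at h
  show mulB H (v s) (mulB H (v s) a) = -a
  have h3 := H.alt_left (v s) a
  rw [mulB_apply H (v s) (v s * a), mulB_apply H (v s) a, mulB_apply H (v s) (v s)] at h3
  rw [h3, show mulB H (v s) (v s) = -1 by rw [← h, neg_neg], mulB_apply H, map_neg]
  have := H.one_mul' a
  rw [mulB_apply H] at this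
  simp [this]

theorem mulB_anti {conj : A → A} (H : IsAltStarAlg A conj) {v : ℕ → A} {m : ℕ}
    (hv : IsHypBasis A conj v m) (s t : ℕ) (h1 : 1 ≤ s) (h2 : s ≤ m) (h3 : 1 ≤ t) (h4 : t ≤ m)
    (hst : s ≠ t) :
    mulB H (v s) * mulB H (v t) = -(mulB H (v t) * mulB H (v s)) := by
  ext a
  show mulB H (v s) (mulB H (v t) a) = -(mulB H (v t) (mulB H (v s) a))
  have ha := hv.anticomm s t h1 h2 h3 h4 hst
  have e1 := H.alt_left (v s) a
  have e2 := H.alt_left (v t) a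
  have e3 := H.alt_left (v s + v t) a
  simp only [mulB_apply H, map_add, add_apply] at e1 e2 e3 ha
  rw [ha] at e3
  simp only [map_neg, neg_apply] at e3
  rw [e1, e2] at e3
  rw [← sub_eq_zero] at e3 ⊢
  rw [← e3]; abel

theorem mulB_emb {conj : A → A} (H : IsAltStarAlg A conj) (v : ℕ → A) (m p : ℕ)
    (w : Fin (m + 1) → ℝ) (hw : ∀ s : Fin (m + 1), (s : ℕ) ≤ p → w s = 0) :
    mulB H (emb v m w) =
      ∑ s ∈ Finset.univ.filter (fun s : Fin (m + 1) => p < (s : ℕ)), w s • mulB H (v s) := by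
  rw [emb, map_sum, Finset.sum_filter]
  refine Finset.sum_congr rfl fun s _ => ?_
  split_ifs with h
  · simp
  · rw [hw s (by omega)]; simp

theorem emb_sq {conj : A → A} (H : IsAltStarAlg A conj) {v : ℕ → A} {m : ℕ} (p : ℕ)
    (hv : IsHypBasis A conj v m)
    (w : Fin (m + 1) → ℝ) (hw : ∀ s : Fin (m + 1), (s : ℕ) ≤ p → w s = 0) :
    mulB H (emb v m w) * mulB H (emb v m w) = -((∑ s, w s ^ 2) • 1) := by
  rw [mulB_emb H v m p w hw, alg_b]
  · congr 2
    rw [Finset.sum_filter]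
    refine Finset.sum_congr rfl fun s _ => ?_
    split_ifs with h
    · rfl
    · rw [hw s (by omega)]; simp
  · intro i hi
    simp only [Finset.mem_filter, Finset.mem_univ, true_and] at hi
    exact mulB_sq H hv _ (by omega) (by omega)
  · intro i hi j hj hij
    simp only [Finset.mem_filter, Finset.mem_univ, true_and] at hi hj
    exact mulB_anti H hv _ _ (by omega) (by omega) (by omega) (by omega)
      (fun h => hij (Fin.ext h))

theorem emb_mul_self {conj : A → A} (H : IsAltStarAlg A conj) {v : ℕ → A} {m : ℕ} (p : ℕ)
    (hv : IsHypBasis A conj v m)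
    (w : Fin (m + 1) → ℝ) (hw : ∀ s : Fin (m + 1), (s : ℕ) ≤ p → w s = 0) :
    emb v m w * emb v m w = -((∑ s, w s ^ 2) • 1) := by
  have := congrArg (fun L => L 1) (emb_sq H p hv w hw)
  simp only [mul_apply_eq_comp, ← mulB_apply, H.mul_one'] at this
  rw [this]; simp

theorem sph_iff {conj : A → A} (H : IsAltStarAlg A conj) {v : ℕ → A} {m : ℕ} (p : ℕ)
    (hv : IsHypBasis A conj v m) (w : Fin (m + 1) → ℝ) :
    w ∈ Sph v m p ↔ (∀ s : Fin (m + 1), (s : ℕ) ≤ p → w s = 0) ∧ ∑ s, w s ^ 2 = 1 := by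
  have h1 : (1 : A) ≠ 0 := by
    have := hv.indep.ne_zero 0
    simpa [hv.v_zero] using this
  refine and_congr_right fun hw => ?_
  rw [emb_mul_self H p hv w hw, neg_inj]
  constructor
  · intro h
    have : ((∑ s, w s ^ 2) - 1) • (1 : A) = 0 := by rw [sub_smul, h, one_smul, sub_self]
    rcases smul_eq_zero.1 this with h | h
    · linarith
    · exact absurd h h1
  · intro h; rw [h, one_smul]

theorem normq_sph {conj : A → A} (H : IsAltStarAlg A conj) {v : ℕ → A} {m : ℕ} (p : ℕ)
    (hv : IsHypBasis A conj v m) (x : Fin (m + 1) → ℝ) (hx : rad m p x ≠ 0) :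
    normq m p x ∈ Sph v m p := by
  rw [sph_iff H p hv]
  constructor
  · intro s hs; simp [normq, xqpart, hs]
  · simp only [normq, Pi.smul_apply, smul_eq_mul, mul_pow, ← Finset.mul_sum]
    have : rad m p x ^ 2 = ∑ s, xqpart m p x s ^ 2 := by
      rw [rad, Real.sq_sqrt]; positivity
    rw [← this]; field_simp

theorem pt_normq {m p : ℕ} (x : Fin (m + 1) → ℝ) (hx : rad m p x ≠ 0) :
    pt m p (normq m p x) (projP m p x) (rad m p x) = x := by
  ext s
  simp only [pt, injP, projP, normq, xqpart, Pi.add_apply, Pi.smul_apply, smul_eq_mul]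
  by_cases h : (s : ℕ) ≤ p
  · simp [h, Nat.lt_succ_of_le h]
    omega
  · have h' : ¬ (s : ℕ) < p + 1 := by omega
    simp only [h, h', dite_false, if_false]
    field_simp
    simp

theorem projP_pt {m p : ℕ} (hp : p < m) (w : Fin (m + 1) → ℝ)
    (hw : ∀ s : Fin (m + 1), (s : ℕ) ≤ p → w s = 0) (y : Fin (p + 1) → ℝ) (r : ℝ) :
    projP m p (pt m p w y r) = y := by
  ext s
  have h1 : (s : ℕ) < m + 1 := by omega
  simp only [projP, pt, injP, h1, dite_true, Pi.add_apply, Pi.smul_apply, smul_eq_mul]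
  rw [hw ⟨s, h1⟩ (by simp; omega)]
  simp
  omega

theorem rad_pt {m p : ℕ} (w : Fin (m + 1) → ℝ)
    (hw : ∀ s : Fin (m + 1), (s : ℕ) ≤ p → w s = 0) (hw1 : ∑ s, w s ^ 2 = 1)
    (y : Fin (p + 1) → ℝ) (r : ℝ) :
    rad m p (pt m p w y r) = |r| := by
  have : ∀ s, xqpart m p (pt m p w y r) s = r * w s := by
    intro s
    by_cases h : (s : ℕ) ≤ p
    · simp [xqpart, h, hw s h]
    · have h' : ¬ (s : ℕ) < p + 1 := by omega
      simp [xqpart, h, pt, injP, h']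
  simp only [rad, this, mul_pow, ← Finset.mul_sum, hw1, mul_one, Real.sqrt_sq_eq_abs]

theorem mem_D_of_mem {conj : A → A} (H : IsAltStarAlg A conj) {v : ℕ → A} {m p : ℕ}
    (hv : IsHypBasis A conj v m) (hp : p < m) {D : Set ((Fin (p + 1) → ℝ) × ℝ)}
    (hDrefl : ∀ z ∈ D, reflD p z ∈ D) {x : Fin (m + 1) → ℝ} (hx : x ∈ OmegaD v m p D) :
    (projP m p x, rad m p x) ∈ D := by
  obtain ⟨w, hw, z, hz, rfl⟩ := hx
  rw [sph_iff H p hv] at hw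
  rw [projP_pt hp w hw.1, rad_pt w hw.1 hw.2]
  rcases abs_choice z.2 with h | h <;> rw [h]
  · exact hz
  · exact hDrefl z hz

/-- `x ↦ x_q` as a continuous linear map. -/
noncomputable def xqL (m p : ℕ) : (Fin (m + 1) → ℝ) →L[ℝ] (Fin (m + 1) → ℝ) :=
  LinearMap.toContinuousLinearMap
    { toFun := xqpart m p
      map_add' := fun x y => by ext s; simp only [xqpart, Pi.add_apply]; split_ifs <;> simp
      map_smul' := fun c y => by
        ext s; simp only [xqpart, Pi.smul_apply, RingHom.id_apply]; split_ifs <;> simp }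

/-- `x ↦ x_p` as a continuous linear map. -/
noncomputable def projL (m p : ℕ) : (Fin (m + 1) → ℝ) →L[ℝ] (Fin (p + 1) → ℝ) :=
  LinearMap.toContinuousLinearMap
    { toFun := projP m p
      map_add' := fun x y => by ext s; simp only [projP, Pi.add_apply]; split_ifs <;> simp
      map_smul' := fun c y => by
        ext s; simp only [projP, Pi.smul_apply, RingHom.id_apply]; split_ifs <;> simp }

/-- `emb` as a continuous linear map. -/
noncomputable def embL (v : ℕ → A) (m : ℕ) : (Fin (m + 1) → ℝ) →L[ℝ] A :=
  LinearMap.toContinuousLinearMap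
    { toFun := emb v m
      map_add' := fun x y => by simp [emb, add_smul, Finset.sum_add_distrib]
      map_smul' := fun c y => by simp [emb, mul_smul, Finset.smul_sum] }

theorem rad_hasFDerivAt {m p : ℕ} (x : Fin (m + 1) → ℝ) (hx : rad m p x ≠ 0) :
    HasFDerivAt (rad m p) ((rad m p x)⁻¹ • ∑ s, xqpart m p x s •
      ((ContinuousLinearMap.proj s).comp (xqL m p) : (Fin (m + 1) → ℝ) →L[ℝ] ℝ)) x := by
  have h0 : (∑ s : Fin (m + 1), (xqpart m p x s) ^ 2) ≠ 0 := by
    intro h; apply hx; rw [rad, h, Real.sqrt_zero]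
  have h1 : HasFDerivAt (fun y => ∑ s : Fin (m + 1), (xqpart m p y s) ^ 2)
      (∑ s, (2 * xqpart m p x s) •
      ((ContinuousLinearMap.proj s).comp (xqL m p) : (Fin (m + 1) → ℝ) →L[ℝ] ℝ)) x := by
    refine HasFDerivAt.fun_sum fun s _ => ?_
    have := (((ContinuousLinearMap.proj s).comp (xqL m p) :
      (Fin (m + 1) → ℝ) →L[ℝ] ℝ).hasFDerivAt (x := x)).pow 2
    refine this.congr_fderiv ?_
    simp [xqL]
  refine (h1.sqrt h0).congr_fderiv ?_
  rw [Finset.smul_sum, Finset.smul_sum]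
  refine Finset.sum_congr rfl fun s _ => ?_
  rw [smul_smul, smul_smul]
  congr 1
  change 1 / (2 * rad m p x) * _ = _
  field_simp

theorem f_hasFDerivAt {conj : A → A} (H : IsAltStarAlg A conj)
    {v : ℕ → A} {m p : ℕ} (hv : IsHypBasis A conj v m) 
    {D : Set ((Fin (p + 1) → ℝ) × ℝ)} (hD : IsOpen D)
    {F₁ F₂ : (Fin (p + 1) → ℝ) × ℝ → A}
    (hF₁ : ContDiffOn ℝ 1 F₁ D) (hF₂ : ContDiffOn ℝ 1 F₂ D)
    {f : (Fin (m + 1) → ℝ) → A} (hind : Induced v m p D F₁ F₂ f)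
    {x : Fin (m + 1) → ℝ} (hx : rad m p x ≠ 0) (hz : (projP m p x, rad m p x) ∈ D) :
    ∃ L : (Fin (m + 1) → ℝ) →L[ℝ] A, HasFDerivAt f L x ∧ ∀ h : Fin (m + 1) → ℝ, ∀ ρ : ℝ,
      ρ = (rad m p x)⁻¹ * ∑ s, xqpart m p x s * xqpart m p h s →
      L h = fderiv ℝ F₁ (projP m p x, rad m p x) (projP m p h, ρ) +
        ((rad m p x)⁻¹ • (emb v m (xqpart m p x) *
          fderiv ℝ F₂ (projP m p x, rad m p x) (projP m p h, ρ)) +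
        ((rad m p x)⁻¹ • (emb v m (xqpart m p h) * F₂ (projP m p x, rad m p x)) -
        (ρ * ((rad m p x)⁻¹) ^ 2) • (emb v m (xqpart m p x) *
          F₂ (projP m p x, rad m p x)))) := by
  obtain ⟨R, hR, hr⟩ : ∃ R : (Fin (m + 1) → ℝ) →L[ℝ] ℝ,
      (∀ h, R h = (rad m p x)⁻¹ * ∑ s, xqpart m p x s * xqpart m p h s) ∧
      HasFDerivAt (rad m p) R x := ⟨_, fun h => by simp [xqL], rad_hasFDerivAt x hx⟩
  have hP : HasFDerivAt (projP m p) (projL m p) x := (projL m p).hasFDerivAt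
  have hX : HasFDerivAt (fun y => emb v m (xqpart m p y)) ((embL v m).comp (xqL m p)) x :=
    ((embL v m).comp (xqL m p)).hasFDerivAt
  have hz' := hP.prodMk hr
  have h1 : HasFDerivAt F₁ _ (projP m p x, rad m p x) :=
    ((hF₁.contDiffAt (hD.mem_nhds hz)).differentiableAt one_ne_zero).hasFDerivAt
  have h2 : HasFDerivAt F₂ _ (projP m p x, rad m p x) :=
    ((hF₂.contDiffAt (hD.mem_nhds hz)).differentiableAt one_ne_zero).hasFDerivAt
  have g1 := h1.comp x hz'
  have g2 := h2.comp x hz'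
  have hinv := (hasFDerivAt_inv hx).comp x hr
  have hw := hinv.smul hX
  have hm := (mulB H).hasFDerivAt_of_bilinear hw g2
  have hG := g1.add hm
  refine ⟨_, hG.congr_of_eventuallyEq ?_, ?_⟩
  · have e1 : ∀ᶠ y in 𝓝 x, (projP m p y, rad m p y) ∈ D :=
      hz'.continuousAt.eventually (hD.mem_nhds hz)
    have e2 : ∀ᶠ y in 𝓝 x, rad m p y ≠ 0 := hr.continuousAt.eventually_ne hx
    filter_upwards [e1, e2] with y hy1 hy2
    have := hind _ (normq_sph H p hv y hy2) _ hy1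
    rw [pt_normq y hy2] at this
    rw [this]
    have h3 : emb v m (normq m p y) = (rad m p y)⁻¹ • emb v m (xqpart m p y) :=
      (embL v m).map_smul (rad m p y)⁻¹ (xqpart m p y)
    rw [h3, mulB_apply H]
    rfl
  · intro h ρ hρ
    have hρ' : R h = ρ := by rw [hρ, hR]
    have hP' : projL m p h = projP m p h := rfl
    have hX' : embL v m (xqL m p h) = emb v m (xqpart m p h) := rfl
    simp only [add_apply, ContinuousLinearMap.comp_apply, ContinuousLinearMap.prod_apply, hρ',
      ContinuousLinearMap.precompR_apply, ContinuousLinearMap.precompL_apply,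
      ContinuousLinearMap.smulRight_apply, smul_apply, hP', hX', mulB_apply H, Function.comp]
    simp [hP', hρ']
    module

theorem slice_hasFDerivAt {conj : A → A} (H : IsAltStarAlg A conj)
    {v : ℕ → A} {m p : ℕ} (hv : IsHypBasis A conj v m)
    {D : Set ((Fin (p + 1) → ℝ) × ℝ)} (hD : IsOpen D)
    {F₁ F₂ : (Fin (p + 1) → ℝ) × ℝ → A}
    (hF₁ : ContDiffOn ℝ 1 F₁ D) (hF₂ : ContDiffOn ℝ 1 F₂ D)
    {f : (Fin (m + 1) → ℝ) → A} (hind : Induced v m p D F₁ F₂ f)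
    {x : Fin (m + 1) → ℝ} (hx : rad m p x ≠ 0) (hz : (projP m p x, rad m p x) ∈ D)
    (h : (Fin (p + 1) → ℝ) × ℝ) :
    fderiv ℝ (sliceFun m p f (normq m p x)) (projP m p x, rad m p x) h =
      fderiv ℝ F₁ (projP m p x, rad m p x) h +
        (rad m p x)⁻¹ • (emb v m (xqpart m p x) *
          fderiv ℝ F₂ (projP m p x, rad m p x) h) := by
  have h1 : HasFDerivAt F₁ _ (projP m p x, rad m p x) :=
    ((hF₁.contDiffAt (hD.mem_nhds hz)).differentiableAt one_ne_zero).hasFDerivAt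
  have h2 : HasFDerivAt F₂ _ (projP m p x, rad m p x) :=
    ((hF₂.contDiffAt (hD.mem_nhds hz)).differentiableAt one_ne_zero).hasFDerivAt
  have h3 : emb v m (normq m p x) = (rad m p x)⁻¹ • emb v m (xqpart m p x) :=
      (embL v m).map_smul (rad m p x)⁻¹ (xqpart m p x)
  have h4 := h1.add ((mulB H (emb v m (normq m p x))).hasFDerivAt.comp _ h2)
  have h6 : sliceFun m p f (normq m p x) =ᶠ[𝓝 (projP m p x, rad m p x)]
      (F₁ + (mulB H (emb v m (normq m p x))) ∘ F₂) := by
    filter_upwards [hD.mem_nhds hz] with z hz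
    exact hind _ (normq_sph H p hv x hx) z hz
  have h5 := h4.congr_of_eventuallyEq h6
  rw [h5.fderiv, h3]
  simp [mulB_apply H]

theorem emb_single (v : ℕ → A) (m : ℕ) (s : Fin (m + 1)) : emb v m (Pi.single s 1) = v s := by
  rw [emb, Finset.sum_eq_single s] <;> simp +contextual [Pi.single_apply]

theorem projP_single_lo {m p : ℕ} (hp : p < m) (s : Fin (p + 1)) :
    projP m p (Pi.single (⟨s, by omega⟩ : Fin (m + 1)) 1) = Pi.single s 1 := by
  ext t
  have h1 : (t : ℕ) < m + 1 := by omega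
  simp [projP, Pi.single_apply, Fin.ext_iff, h1]

theorem projP_single_hi {m p : ℕ} (s : Fin (m + 1)) (hs : p < (s : ℕ)) :
    projP m p (Pi.single s 1) = 0 := by
  ext t
  simp only [projP, Pi.single_apply, Fin.ext_iff, Pi.zero_apply]
  split_ifs <;> first | rfl | omega

theorem xqpart_single_lo {m p : ℕ} (s : Fin (m + 1)) (hs : (s : ℕ) ≤ p) :
    xqpart m p (Pi.single s 1) = 0 := by
  ext t
  simp only [xqpart, Pi.single_apply, Fin.ext_iff, Pi.zero_apply]
  split_ifs <;> first | rfl | omega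

theorem xqpart_single_hi {m p : ℕ} (s : Fin (m + 1)) (hs : p < (s : ℕ)) :
    xqpart m p (Pi.single s 1) = Pi.single s 1 := by
  ext t
  simp only [xqpart, Pi.single_apply, Fin.ext_iff]
  split_ifs <;> first | rfl | omega

theorem reflP_eq {m p : ℕ} (x : Fin (m + 1) → ℝ) (hx : rad m p x ≠ 0) :
    reflP m p x = pt m p (normq m p x) (projP m p x) (-rad m p x) := by
  ext s
  simp only [pt, injP, projP, normq, xqpart, Pi.add_apply, Pi.smul_apply, smul_eq_mul, reflP]
  by_cases h : (s : ℕ) ≤ p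
  · simp [h, Nat.lt_succ_of_le h]
    omega
  · have h' : ¬ (s : ℕ) < p + 1 := by omega
    simp only [h, h', dite_false, if_false]
    field_simp
    simp

theorem card_hi {m p : ℕ} (hp : p < m) :
    (Finset.univ.filter (fun s : Fin (m + 1) => p < (s : ℕ))).card = m - p := by
  have := Fin.card_Ioi (⟨p, by omega⟩ : Fin (m + 1))
  rw [show (Finset.univ.filter (fun s : Fin (m + 1) => p < (s : ℕ))) =
    Finset.Ioi (⟨p, by omega⟩ : Fin (m + 1)) by ext; simp [Fin.lt_def]]
  rw [this]; simp

theorem sum_split {m p : ℕ} (hp : p < m) (g : Fin (m + 1) → A) :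
    ∑ s, g s = ∑ s : Fin (p + 1), g ⟨s, by omega⟩ +
      ∑ s ∈ Finset.univ.filter (fun s : Fin (m + 1) => p < (s : ℕ)), g s := by
  rw [← Finset.sum_filter_add_sum_filter_not Finset.univ (fun s : Fin (m + 1) => p < (s : ℕ)),
    add_comm]
  congr 1
  symm
  refine Finset.sum_bij (fun s _ => (⟨s, by omega⟩ : Fin (m + 1))) ?_ ?_ ?_ ?_
  · intro s _; simp; omega
  · intro s _ t _ h; simpa [Fin.ext_iff] using h
  · intro s hs
    simp at hs
    exact ⟨⟨s, by omega⟩, by simp, rfl⟩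
  · intro s _; rfl

end helpers

/-- For `f ∈ GS¹(Ω_D) ∩ C¹(Ω_D, 𝔸)`, on `Ω_D ∖ ℝ^{p+1}`:
(i) `Γ f = (q-1) x_q f'_s`;
(ii) `(D_x - D_ω) f = (1-q) f'_s`. -/
theorem spherical_dirac_formulas
    {A : Type*} [NormedAddCommGroup A] [NormedSpace ℝ A] [Mul A] [One A]
    (conj : A → A) (H : IsAltStarAlg A conj)
    (v : ℕ → A) (m p : ℕ) (hv : IsHypBasis A conj v m) (hp : p < m)
    (D : Set ((Fin (p + 1) → ℝ) × ℝ)) (hD : IsOpen D)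
    (hDrefl : ∀ z ∈ D, reflD p z ∈ D)
    (F₁ F₂ : (Fin (p + 1) → ℝ) × ℝ → A) (hstem : IsStem p D F₁ F₂)
    (hF₁ : ContDiffOn ℝ 1 F₁ D) (hF₂ : ContDiffOn ℝ 1 F₂ D)
    (f : (Fin (m + 1) → ℝ) → A) (hind : Induced v m p D F₁ F₂ f)
    (hf : ContDiffOn ℝ 1 f (OmegaD v m p D)) :
    ∀ x ∈ OmegaD v m p D, rad m p x ≠ 0 →
      sphericalGamma v m p f x =
        ((((m - p : ℕ) : ℝ)) - 1) • (emb v m (xqpart m p x) * sder v m p f x) ∧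
      Dop v m 0 m f x - DomCRat v m p f x =
        (1 - (((m - p : ℕ) : ℝ))) • sder v m p f x := by
  intro x hxO hx
  have hz := mem_D_of_mem H hv hp hDrefl hxO
  obtain ⟨L, hL, hLf⟩ := f_hasFDerivAt H hv hD hF₁ hF₂ hind hx hz
  have hsl := slice_hasFDerivAt H hv hD hF₁ hF₂ hind hx hz
  have hxq : ∀ s : Fin (m + 1), (s : ℕ) ≤ p → xqpart m p x s = 0 := by
    intro s hs; simp [xqpart, hs]
  have hxq' : ∀ s : Fin (m + 1), p < (s : ℕ) → xqpart m p x s = x s := by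
    intro s hs; simp [xqpart, hs]
  have hnq : emb v m (normq m p x) = (rad m p x)⁻¹ • emb v m (xqpart m p x) :=
      (embL v m).map_smul (rad m p x)⁻¹ (xqpart m p x)
  have hr2 : ∑ s, xqpart m p x s ^ 2 = rad m p x ^ 2 := by
    rw [rad, Real.sq_sqrt]; positivity
  have hXX := emb_sq H p hv _ hxq
  rw [hr2] at hXX
  have hXXa : ∀ a, mulB H (emb v m (xqpart m p x)) (mulB H (emb v m (xqpart m p x)) a) =
      -(rad m p x ^ 2 • a) := fun a => by
    have := congrArg (fun L => L a) hXX
    simpa using this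
  have hXe := mulB_emb H v m p _ hxq
  -- the spherical derivative
  have hsd : sder v m p f x = (rad m p x)⁻¹ • F₂ (projP m p x, rad m p x) := by
    have e1 := hind _ (normq_sph H p hv x hx) _ hz
    have e2 := hind _ (normq_sph H p hv x hx) _ (hDrefl _ hz)
    rw [(hstem _ hz).1, (hstem _ hz).2] at e2
    simp only [reflD] at e2
    rw [pt_normq x hx] at e1
    rw [← reflP_eq x hx] at e2
    rw [sder, e1, e2, hnq]
    simp only [mulB_apply H, map_add, map_sub, map_neg, map_smul, smul_apply, hXXa]
    match_scalars
    · ring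
    · field_simp; ring
  set r := rad m p x with hr
  set z := (projP m p x, r) with hzdef
  set X := emb v m (xqpart m p x) with hX
  set S := Finset.univ.filter (fun s : Fin (m + 1) => p < (s : ℕ)) with hS
  have hS' : ∀ s ∈ S, p < (s : ℕ) := fun s hs => by simpa [hS] using hs
  have hT1 : ∀ i ∈ S, mulB H (v i) * mulB H (v i) = -1 := fun i hi => by
    have := hS' i hi
    exact mulB_sq H hv _ (by omega) (by omega)
  have hT2 : ∀ i ∈ S, ∀ j ∈ S, i ≠ j →
      mulB H (v i) * mulB H (v j) = -(mulB H (v j) * mulB H (v i)) := fun i hi j hj hij => by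
    have := hS' i hi
    have := hS' j hj
    exact mulB_anti H hv _ _ (by omega) (by omega) (by omega) (by omega)
      (fun h => hij (Fin.ext h))
  have hcard : (S.card : ℝ) = ((m - p : ℕ) : ℝ) := by rw [hS, card_hi hp]
  have hXe' : mulB H X = ∑ s ∈ S, x s • mulB H (v s) := by
    rw [hXe]
    exact Finset.sum_congr rfl fun s hs => by rw [hxq' s (hS' s hs)]
  set B := fderiv ℝ F₁ z (0, 1) + r⁻¹ • (mulB H X (fderiv ℝ F₂ z (0, 1))) with hB
  -- derivatives in the high directions
  have hhi : ∀ s ∈ S, pdF m s f x = (r⁻¹ * x s) • B + r⁻¹ • mulB H (v s) (F₂ z)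
      - (r⁻¹ ^ 3 * x s) • mulB H X (F₂ z) := by
    intro s hs
    have hs' := hS' s hs
    have hρ : r⁻¹ * x s = r⁻¹ * ∑ t, xqpart m p x t * xqpart m p (Pi.single s 1) t := by
      rw [xqpart_single_hi s hs']
      simp [Pi.single_apply, hxq' s hs']
    rw [pdF, hL.fderiv, hLf _ _ hρ, xqpart_single_hi s hs', projP_single_hi s hs', emb_single,
      show ((0 : Fin (p + 1) → ℝ), r⁻¹ * x s) = (r⁻¹ * x s) • ((0 : Fin (p + 1) → ℝ), (1 : ℝ)) by
        simp]
    simp only [mulB_apply H, map_smul, hB]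
    module
  have hlo : ∀ s : Fin (p + 1), pdF m ⟨s, by omega⟩ f x =
      pdSx p s (sliceFun m p f (normq m p x)) z := by
    intro s
    have hs' : (((⟨s, by omega⟩ : Fin (m + 1)) : ℕ)) ≤ p := by simp; omega
    have hρ : (0 : ℝ) = r⁻¹ * ∑ t, xqpart m p x t *
        xqpart m p (Pi.single (⟨s, by omega⟩ : Fin (m + 1)) 1) t := by
      rw [xqpart_single_lo _ hs']
      simp
    rw [pdF, hL.fderiv, hLf _ _ hρ, xqpart_single_lo _ hs', projP_single_lo hp, pdSx, hsl]
    have h0 : emb v m (0 : Fin (m + 1) → ℝ) = 0 := by simp [emb]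
    rw [h0]
    simp [mulB_apply H]
  constructor
  · have hd := alg_d S (fun i => mulB H (v i)) x hT1 hT2
    rw [← hXe'] at hd
    have hd' := congrArg (fun L => L (F₂ z)) hd
    simp only [sum_apply, mul_apply_eq_comp, smul_apply, sub_apply] at hd'
    have : ∑ i : Fin (m + 1), ∑ j : Fin (m + 1), (if p < (i : ℕ) ∧ p < (j : ℕ) then
        v (i : ℕ) * (v (j : ℕ) * (x i • pdF m j f x - x j • pdF m i f x)) else 0) =
        r⁻¹ • ((2 - 2 * (S.card : ℝ)) • mulB H X (F₂ z)) := by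
      rw [← hd', Finset.smul_sum, hS, Finset.sum_filter]
      refine Finset.sum_congr rfl fun i _ => ?_
      by_cases hi : p < (i : ℕ)
      · simp only [hi, true_and, if_true]
        rw [Finset.smul_sum, Finset.sum_filter]
        refine Finset.sum_congr rfl fun j _ => ?_
        by_cases hj : p < (j : ℕ)
        · simp only [hj, if_true]
          rw [hhi i (by simpa [hS] using hi), hhi j (by simpa [hS] using hj)]
          simp only [mulB_apply H, ← map_smul]
          congr 2
          simp only [map_smul]
          module
        · simp [hj]
      · simp [hi]
    rw [sphericalGamma, this, hsd, hcard, mulB_apply H, map_smul]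
    module
  · rw [DomCRat, DomCR, DopSx, Dop, sum_split hp]
    have e1 : ∑ s : Fin (p + 1), (if 0 ≤ ((⟨s, by omega⟩ : Fin (m + 1)) : ℕ) ∧
        ((⟨s, by omega⟩ : Fin (m + 1)) : ℕ) ≤ m then
        v ((⟨s, by omega⟩ : Fin (m + 1)) : ℕ) * pdF m ⟨s, by omega⟩ f x else 0) =
        ∑ s : Fin (p + 1), v (s : ℕ) * pdSx p s (sliceFun m p f (normq m p x)) z := by
      refine Finset.sum_congr rfl fun s _ => ?_
      rw [if_pos ⟨by omega, by simp; omega⟩, hlo s]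
    have e2 : ∑ s ∈ S, (if 0 ≤ (s : ℕ) ∧ (s : ℕ) ≤ m then v (s : ℕ) * pdF m s f x else 0) =
        r⁻¹ • mulB H X B - (r⁻¹ * (S.card : ℝ)) • F₂ z
          - (r⁻¹ ^ 3) • mulB H X (mulB H X (F₂ z)) := by
      have : ∀ a, mulB H X a = ∑ s ∈ S, x s • mulB H (v s) a := fun a => by
        rw [hXe']; simp
      rw [this B, this (mulB H X (F₂ z)), Finset.smul_sum, Finset.smul_sum,
        show (r⁻¹ * (S.card : ℝ)) • F₂ z = ∑ s ∈ S, r⁻¹ • F₂ z by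
          rw [Finset.sum_const, ← Nat.cast_smul_eq_nsmul ℝ, smul_smul, mul_comm],
        ← Finset.sum_sub_distrib, ← Finset.sum_sub_distrib]
      refine Finset.sum_congr rfl fun s hs => ?_
      rw [if_pos ⟨by omega, by omega⟩, hhi s hs, mulB_apply H]
      have h1 := congrArg (fun L => L (F₂ z)) (hT1 s hs)
      simp only [mul_apply_eq_comp, neg_apply, one_apply_eq_self] at h1
      simp only [map_add, map_sub, map_smul, h1]
      module
    have e3 : pdSr p (sliceFun m p f (normq m p x)) z = B := by
      rw [pdSr, hsl, hB, mulB_apply H]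
    rw [e1, e2, e3, hXXa, hnq, hsd, hcard, mulB_apply H, map_smul, smul_apply]
    match_scalars
    · ring
    · ring
    · field_simp; ring

end GPSM
end
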